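/- arXiv:1712.02775 — 3 statements merged into one kernel-verified Lean document; each statement's English description precedes it below -/
import Mathlib

section
/- Let k be a number field and let (s_𝔭) be a family of nonnegative real numbers, indexed by the nonzero prime ideals 𝔭 of the ring of integers of k, that is bounded above by some constant M. For a real N ≥ 1 set C_N = Σ_{𝔭 : N(𝔭) ≤ N} s_𝔭 · log N(𝔭), D_N = Σ_{𝔭 : N(𝔭) ≤ N} s_𝔭, and π_k(N) = #{𝔭 : N(𝔭) ≤ N}, where N(𝔭) denotes the absolute norm of 𝔭. If C_N / N converges to a limit L as N → ∞, then D_N / π_k(N) also converges to L as N → ∞. -/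
open Filter IsDedekindDomain

/-!
The heart of the matter is the prime ideal theorem in the form `θ_K(x) ~ x`, where `θ_K(x)` is the
sum of `log N(P)` over the primes `P` of norm at most `x`. By the Wiener–Ikehara theorem it suffices
that `∑ log N(P) N(P)⁻ˢ - 1 / (s - 1)` extends continuously to `Re s ≥ 1`. Counting lattice points
with a Lipschitz cutoff gives `∑ cutoff (N(I) t) = c / t + O(t^(-α))` with `α < 1`, summed over all
ideals `I`; taking Mellin transforms continues `ζ_K` past the line `Re s = 1`, with a simple pole
at `1`, and the inequality `3 + 4 cos u + cos 2u ≥ 0` excludes zeros on that line.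

Let `S(x)` be the sum of `s P` over the primes of norm at most `x`. Then `log x * S(x)` exceeds
`∑ s P * log N(P)` by `∑ s P * log (x / N(P))`, which is `o(x)` because `s` is bounded and there are
few prime ideals above each of the few rational primes up to `x`. So the averages of `s` and those
of `1` are both read off from the sums weighted by `log N(P)`.
-/

open MeasureTheory Set Topology FourierTransform
open scoped NNReal

theorem conj_fourier_of_even {f : ℝ → ℝ} (hf : ∀ x, f (-x) = f x) (y : ℝ) :
    (starRingEnd ℂ) (𝓕 (fun x => (f x : ℂ)) y) = 𝓕 (fun x => (f x : ℂ)) y :=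
  calc (starRingEnd ℂ) (𝓕 (fun x => (f x : ℂ)) y) = 𝓕⁻ (fun x => (f x : ℂ)) y := by
        rw [Real.fourier_eq', Real.fourierInv_eq', ← integral_conj]
        simp [← Complex.exp_conj, map_ofNat]
    _ = 𝓕 (fun x => (f x : ℂ)) y := by
        rw [Real.fourierInv_eq_fourier_comp_neg]
        simp [hf]

theorem exists_fourier_eq_nonneg_kernel :
    ∃ (φ : ℝ → ℂ) (K : ℝ → ℝ), Continuous φ ∧ HasCompactSupport φ ∧ (∀ y, 𝓕 φ y = K y) ∧
      (∀ y, 0 ≤ K y) ∧ Integrable K ∧ 0 < ∫ y, K y := by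
  obtain ⟨β⟩ : Nonempty (ContDiffBump (0 : ℝ)) := inferInstance
  have hβc : HasCompactSupport fun x => (β x : ℂ) :=
    β.hasCompactSupport.comp_left Complex.ofReal_zero
  have hβd : ContDiff ℝ (⊤ : ℕ∞) fun x => (β x : ℂ) := Complex.ofRealCLM.contDiff.comp β.contDiff
  have hβi : Integrable fun x => (β x : ℂ) := hβd.continuous.integrable_of_hasCompactSupport hβc
  set F : ℝ → ℂ := 𝓕 fun x => (β x : ℂ) with hF
  have hF0 : F 0 = (∫ x, β x : ℝ) := by
    rw [hF, Real.fourier_real_eq, ← integral_complex_ofReal]; simp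
  have hF_real (y : ℝ) : (starRingEnd ℂ) (F y) = F y := conj_fourier_of_even β.neg y
  let βS : SchwartzMap ℝ ℂ := hβc.toSchwartzMap hβd
  have hFS : F = 𝓕 βS := (SchwartzMap.fourier_coe βS).symm
  have hFcont : Continuous F := hFS ▸ (𝓕 βS).continuous
  have hFsq : Integrable fun y => ‖F y‖ ^ 2 := by
    rw [hFS]; exact ((𝓕 βS).memLp 2).integrable_norm_pow (by norm_num)
  refine ⟨MeasureTheory.convolution (fun x => (β x : ℂ)) (fun x => (β x : ℂ))
    (ContinuousLinearMap.mul ℂ ℂ) volume, fun y => ‖F y‖ ^ 2,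
    hβc.continuous_convolution_right _ hβi.locallyIntegrable hβd.continuous,
    hβc.convolution _ hβc, fun y => ?_, fun y => by positivity, hFsq, ?_⟩
  · rw [Real.fourier_mul_convolution_eq hβi hβi, ← hF]
    nth_rewrite 1 [← hF_real y]
    rw [Complex.conj_mul', Complex.ofReal_pow]
  · refine integral_pos_of_integrable_nonneg_nonzero (x := 0) (by fun_prop) hFsq
      (fun y => by positivity) ?_
    rw [hF0]
    have := β.integral_pos (μ := volume)
    simpa using this.ne'

theorem exists_fourier_eq_concentrated_kernel {ε h : ℝ} (hε : 0 < ε) (hh : 0 < h) :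
    ∃ (φ : ℝ → ℂ) (K : ℝ → ℝ), Continuous φ ∧ HasCompactSupport φ ∧ (∀ y, 𝓕 φ y = K y) ∧
      (∀ y, 0 ≤ K y) ∧ Integrable K ∧ ∫ y in {y | h < |y|}, K y < ε * ∫ y, K y := by
  obtain ⟨φ, K, hφ, hφc, hφK, hK0, hKi, hKpos⟩ := exists_fourier_eq_nonneg_kernel
  have htail : Tendsto (fun l : ℝ => ∫ y in {y | l * h < |y|}, K y) atTop (𝓝 0) := by
    have hconst := tendsto_setIntegral_of_antitone (μ := volume) (f := K)
      (s := fun l : ℝ => {y | l * h < |y|})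
      (fun l => measurableSet_lt measurable_const continuous_abs.measurable)
      (fun l l' hl y (hy : l' * h < |y|) => lt_of_le_of_lt (by gcongr) hy) ⟨0, hKi.integrableOn⟩
    have hempty : ⋂ l : ℝ, {y : ℝ | l * h < |y|} = ∅ := by
      refine eq_empty_of_forall_notMem fun y hy => ?_
      have : |y| / h * h < |y| := mem_iInter.mp hy _
      rw [div_mul_cancel₀ _ hh.ne'] at this
      exact lt_irrefl _ this
    simpa [hempty] using hconst
  obtain ⟨l, hl, hl0⟩ :=
    ((htail.eventually_lt_const (mul_pos hε hKpos)).and (eventually_gt_atTop 0)).exists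
  have hset : {y : ℝ | h < |y|} = (fun y => l * y) ⁻¹' {y | l * h < |y|} := by
    ext y
    simp [abs_mul, abs_of_pos hl0, hl0]
  refine ⟨fun x => l⁻¹ * φ (l⁻¹ * x), fun y => K (l * y), by fun_prop,
    (hφc.comp_homeomorph (Homeomorph.mulLeft₀ l⁻¹ (inv_ne_zero hl0.ne'))).mul_left, fun y => ?_,
    fun y => hK0 _, hKi.comp_mul_left' hl0.ne', ?_⟩
  · rw [← hφK, Real.fourier_real_eq, Real.fourier_real_eq]
    have hsub :=
      Measure.integral_comp_inv_mul_left (fun x => Real.fourierChar (-(x * (l * y))) • φ x) l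
    rw [abs_of_pos hl0] at hsub
    have : ∀ x, Real.fourierChar (-(x * y)) • ((l⁻¹ : ℂ) * φ (l⁻¹ * x)) =
        (l⁻¹ : ℝ) • (Real.fourierChar (-(l⁻¹ * x * (l * y))) • φ (l⁻¹ * x)) := fun x => by
      rw [show l⁻¹ * x * (l * y) = x * y by field_simp]
      simp only [Circle.smul_def, Complex.real_smul, smul_eq_mul, Complex.ofReal_inv]; ring
    simp_rw [Complex.ofReal_inv, this, integral_smul, hsub, smul_smul]
    rw [inv_mul_cancel₀ hl0.ne', one_smul]
  · have hmeas (a : ℝ) : MeasurableSet {y : ℝ | a < |y|} :=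
      measurableSet_lt measurable_const continuous_abs.measurable
    rw [Measure.integral_comp_mul_left, ← integral_indicator (hmeas h), hset,
      show ((fun y => l * y) ⁻¹' {y | l * h < |y|}).indicator (fun y => K (l * y)) =
        fun y => {y | l * h < |y|}.indicator K (l * y) from rfl,
      Measure.integral_comp_mul_left, integral_indicator (hmeas _), smul_eq_mul, smul_eq_mul,
      mul_left_comm]
    gcongr

theorem fourier_fourierChar_mul (φ : ℝ → ℂ) (v u : ℝ) :
    𝓕 (fun w => (Real.fourierChar (v * w) : ℂ) * φ w) u = 𝓕 φ (u - v) := by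
  rw [Real.fourier_real_eq, Real.fourier_real_eq]
  refine integral_congr_ae (ae_of_all _ fun w => ?_)
  simp only [Circle.smul_def, smul_eq_mul]
  rw [← mul_assoc, ← Circle.coe_mul, ← AddChar.map_add_eq_mul]
  ring_nf

theorem integrable_exp_neg_mul_of_bounded {b : ℝ → ℂ} {B : ℝ} (hb : Measurable b)
    (hbB : ∀ u, ‖b u‖ ≤ B) (hb0 : ∀ u < 0, b u = 0) {σ : ℝ} (hσ : 0 < σ) :
    Integrable fun u => (Real.exp (-σ * u) : ℂ) * b u := by
  have hexp : Integrable ((Ici 0).indicator fun u => Real.exp (-σ * u) * B) := by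
    rw [integrable_indicator_iff measurableSet_Ici, integrableOn_Ici_iff_integrableOn_Ioi]
    exact (integrableOn_exp_mul_Ioi (by linarith) 0).mul_const B
  refine hexp.mono' (by fun_prop) (ae_of_all _ fun u => ?_)
  rcases lt_or_ge u 0 with hu | hu
  · simp [hb0 u hu, hu.not_ge]
  · rw [indicator_of_mem (mem_Ici.mpr hu), norm_mul, Complex.norm_of_nonneg (Real.exp_pos _).le]
    gcongr
    exact hbB u

theorem tendsto_integral_exp_neg_mul {b f : ℝ → ℂ} {B : ℝ} (hb : Measurable b)
    (hbB : ∀ u, ‖b u‖ ≤ B) (hb0 : ∀ u < 0, b u = 0) (hf : Integrable f) :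
    Tendsto (fun σ : ℝ => ∫ u, (Real.exp (-σ * u) : ℂ) * b u * f u) (𝓝[>] 0)
      (𝓝 (∫ u, b u * f u)) := by
  refine tendsto_integral_filter_of_dominated_convergence (fun u => B * ‖f u‖)
    (.of_forall fun σ => ?_) ?_ (hf.norm.const_mul B) (ae_of_all _ fun u => ?_)
  · exact (by fun_prop : Measurable fun u => (Real.exp (-σ * u) : ℂ) * b u).aestronglyMeasurable.mul
      hf.aestronglyMeasurable
  · filter_upwards [self_mem_nhdsWithin] with σ hσ
    refine ae_of_all _ fun u => ?_
    rw [norm_mul]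
    gcongr
    rcases lt_or_ge u 0 with hu | hu
    · simpa [hb0 u hu] using (norm_nonneg _).trans (hbB u)
    · rw [norm_mul, Complex.norm_of_nonneg (Real.exp_pos _).le]
      refine (mul_le_of_le_one_left (norm_nonneg _) (Real.exp_le_one_iff.mpr ?_)).trans (hbB u)
      nlinarith [mem_Ioi.mp hσ]
  · have hcont : Continuous fun σ : ℝ => (Real.exp (-σ * u) : ℂ) * b u * f u := by fun_prop
    simpa using (hcont.tendsto 0).mono_left nhdsWithin_le_nhds

theorem integral_mul_fourier_eq_fourier_boundary {b : ℝ → ℂ} {G : ℂ → ℂ} {B : ℝ} (hb : Measurable b)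
    (hbB : ∀ u, ‖b u‖ ≤ B) (hb0 : ∀ u < 0, b u = 0) (hG : ContinuousOn G {s | 0 ≤ s.re})
    (hbG : ∀ σ > 0, ∀ w : ℝ, 𝓕 (fun u => (Real.exp (-σ * u) : ℂ) * b u) w =
      G (σ + 2 * Real.pi * w * Complex.I))
    {φ : ℝ → ℂ} (hφ : Continuous φ) (hφc : HasCompactSupport φ) (hφi : Integrable (𝓕 φ)) (v : ℝ) :
    ∫ u, b u * 𝓕 φ (u - v) = 𝓕 (fun w : ℝ => G (2 * Real.pi * w * Complex.I) * φ w) (-v) := by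
  set χ : ℝ → ℂ := fun w => (Real.fourierChar (v * w) : ℂ) * φ w with hχ
  have hχcont : Continuous χ := by fun_prop
  have hχc : HasCompactSupport χ := hφc.mul_left
  have hswap (σ : ℝ) (hσ : 0 < σ) : ∫ u, (Real.exp (-σ * u) : ℂ) * b u * 𝓕 φ (u - v) =
      ∫ w : ℝ, G (σ + 2 * Real.pi * w * Complex.I) * χ w := by
    have hflip := VectorFourier.integral_fourierIntegral_smul_eq_flip (μ := volume) (ν := volume)
      (L := innerₗ ℝ) Real.continuous_fourierChar continuous_inner
      (integrable_exp_neg_mul_of_bounded hb hbB hb0 hσ)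
      (hχcont.integrable_of_hasCompactSupport hχc)
    rw [flip_innerₗ] at hflip
    simp_rw [← hbG σ hσ, ← fourier_fourierChar_mul φ v]
    exact hflip.symm
  have hleft := tendsto_integral_exp_neg_mul hb hbB hb0 (hφi.comp_sub_right v)
  have hright : Tendsto (fun σ : ℝ => ∫ w : ℝ, G (σ + 2 * Real.pi * w * Complex.I) * χ w) (𝓝[>] 0)
      (𝓝 (∫ w : ℝ, G (2 * Real.pi * w * Complex.I) * χ w)) := by
    have hcont : ContinuousOn (fun σ : ℝ => ∫ w : ℝ, G (σ + 2 * Real.pi * w * Complex.I) * χ w)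
        (Ici 0) := by
      refine continuousOn_integral_of_compact_support hχc ?_ fun σ w _ hw => by
        rw [image_eq_zero_of_notMem_tsupport hw, mul_zero]
      refine (hG.comp (by fun_prop) fun p hp => ?_).mul (by fun_prop)
      simpa using hp.1
    simpa using (hcont 0 self_mem_Ici).mono_left (nhdsWithin_mono _ Ioi_subset_Ici_self)
  rw [tendsto_nhds_unique hleft (hright.congr' (eventually_mem_nhdsWithin.mono
    fun σ hσ => (hswap σ hσ).symm)), Real.fourier_real_eq]
  refine integral_congr_ae (ae_of_all _ fun w => ?_)
  simp only [hχ, Circle.smul_def, smul_eq_mul]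
  ring_nf

theorem tendsto_integral_mul_fourier_sub {b : ℝ → ℂ} {G : ℂ → ℂ} {B : ℝ} (hb : Measurable b)
    (hbB : ∀ u, ‖b u‖ ≤ B) (hb0 : ∀ u < 0, b u = 0) (hG : ContinuousOn G {s | 0 ≤ s.re})
    (hbG : ∀ σ > 0, ∀ w : ℝ, 𝓕 (fun u => (Real.exp (-σ * u) : ℂ) * b u) w =
      G (σ + 2 * Real.pi * w * Complex.I))
    {φ : ℝ → ℂ} (hφ : Continuous φ) (hφc : HasCompactSupport φ) (hφi : Integrable (𝓕 φ)) :
    Tendsto (fun v => ∫ u, b u * 𝓕 φ (u - v)) atTop (𝓝 0) := by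
  simp_rw [integral_mul_fourier_eq_fourier_boundary hb hbB hb0 hG hbG hφ hφc hφi]
  exact (Real.zero_at_infty_fourier _).comp (tendsto_neg_atTop_atBot.mono_right atBot_le_cocompact)

theorem mul_integral_le_integral_mul_of_le_near {b K : ℝ → ℝ} {B m h v : ℝ} (hb : Measurable b)
    (hbB : ∀ u, |b u| ≤ B) (hK0 : ∀ y, 0 ≤ K y) (hKi : Integrable K)
    (hm : ∀ u, |u - v| ≤ h → m ≤ b u) :
    m * (∫ y, K y) - (m + B) * ∫ y in {y | h < |y|}, K y ≤ ∫ u, b u * K (u - v) := by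
  have hmeas : MeasurableSet {y : ℝ | h < |y|} :=
    measurableSet_lt measurable_const continuous_abs.measurable
  rw [← integral_indicator hmeas, ← integral_const_mul, ← integral_const_mul,
    ← integral_sub (hKi.const_mul m) ((hKi.indicator hmeas).const_mul _),
    ← integral_sub_right_eq_self _ v]
  refine integral_mono
    (((hKi.const_mul m).sub ((hKi.indicator hmeas).const_mul _)).comp_sub_right v)
    ((hKi.comp_sub_right v).bdd_mul hb.aestronglyMeasurable (ae_of_all _ hbB)) fun u => ?_
  by_cases hu : h < |u - v|
  · rw [Set.indicator_of_mem (s := {y : ℝ | h < |y|}) hu]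
    nlinarith [neg_le_of_abs_le (hbB u), hK0 (u - v)]
  · rw [Set.indicator_of_notMem (s := {y : ℝ | h < |y|}) hu]
    nlinarith [hm u (not_lt.mp hu), hK0 (u - v)]

theorem eventually_exists_near_lt {b : ℝ → ℝ} {G : ℂ → ℂ} {B : ℝ} (hb : Measurable b)
    (hbB : ∀ u, |b u| ≤ B) (hb0 : ∀ u < 0, b u = 0) (hG : ContinuousOn G {s | 0 ≤ s.re})
    (hbG : ∀ σ > 0, ∀ w : ℝ, 𝓕 (fun u => (Real.exp (-σ * u) : ℂ) * (b u : ℂ)) w =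
      G (σ + 2 * Real.pi * w * Complex.I)) {m h : ℝ} (hm : 0 < m) (hh : 0 < h) :
    ∀ᶠ v in atTop, ∃ u, |u - v| ≤ h ∧ b u < m := by
  have hB : 0 ≤ B := (abs_nonneg _).trans (hbB 0)
  obtain ⟨φ, K, hφ, hφc, hφK, hK0, hKi, htail⟩ :=
    exists_fourier_eq_concentrated_kernel (ε := m / (m + B)) (by positivity) hh
  have hφi : Integrable (𝓕 φ) := by rw [funext hφK]; exact hKi.ofReal
  have hlim := tendsto_integral_mul_fourier_sub (Complex.measurable_ofReal.comp hb)
    (fun u => (Complex.norm_real _).trans_le (hbB u)) (fun u hu => by simp [hb0 u hu]) hG hbG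
    hφ hφc hφi
  have hgap : 0 < m * (∫ y, K y) - (m + B) * ∫ y in {y | h < |y|}, K y := by
    rw [div_mul_eq_mul_div, lt_div_iff₀ (by positivity)] at htail
    linarith
  simp only [Function.comp_apply, hφK, ← Complex.ofReal_mul, integral_complex_ofReal] at hlim
  filter_upwards [((Complex.continuous_re.tendsto _).comp hlim).eventually_lt_const hgap] with v hv
  by_contra! hfar
  exact hv.not_ge (mul_integral_le_integral_mul_of_le_near hb hbB hK0 hKi hfar)

theorem tendsto_zero_of_continuous_laplace_boundary {b : ℝ → ℝ} {G : ℂ → ℂ} {A B : ℝ}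
    (hA : 0 < A) (hb : Measurable b) (hbB : ∀ u, |b u| ≤ B) (hb0 : ∀ u < 0, b u = 0)
    (hG : ContinuousOn G {s | 0 ≤ s.re})
    (hbG : ∀ σ > 0, ∀ w : ℝ, 𝓕 (fun u => (Real.exp (-σ * u) : ℂ) * (b u : ℂ)) w =
      G (σ + 2 * Real.pi * w * Complex.I))
    (hdec : ∀ u w, 0 ≤ u → u ≤ w → b u - A * (w - u) ≤ b w) :
    Tendsto b atTop (𝓝 0) := by
  refine tendsto_order.mpr ⟨fun a ha => ?_, fun a ha => ?_⟩
  · set ε := -a / 3 with hε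
    set δ := ε / A with hδ
    have hδ0 : 0 < δ := div_pos (by linarith) hA
    have hnear := eventually_exists_near_lt (b := fun u => -b u) (G := fun s => -G s) hb.neg
      (fun u => (abs_neg _).trans_le (hbB u)) (fun u hu => by simp [hb0 u hu]) hG.neg
      (fun σ hσ w => by
        rw [← hbG σ hσ w, Real.fourier_real_eq, Real.fourier_real_eq, ← integral_neg]
        simp) (m := ε) (by linarith) hδ0
    filter_upwards [(tendsto_atTop_add_const_right _ (-δ) tendsto_id).eventually hnear,
      eventually_ge_atTop (2 * δ)] with x ⟨u, hu, hbu⟩ hx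
    have hux := abs_le.mp hu
    simp only [id_eq] at hux
    have hdist : A * (x - u) ≤ A * (2 * δ) := by gcongr; linarith
    have hAδ : A * δ = ε := by rw [hδ]; field_simp
    linarith [hdec u x (by linarith) (by linarith)]
  · set ε := a / 3 with hε
    set δ := ε / A with hδ
    have hδ0 : 0 < δ := by positivity
    have hnear := eventually_exists_near_lt hb hbB hb0 hG hbG (m := ε) (by linarith) hδ0
    filter_upwards [(tendsto_atTop_add_const_right _ δ tendsto_id).eventually hnear,
      eventually_ge_atTop 0] with x ⟨u, hu, hbu⟩ hx
    have hux := abs_le.mp hu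
    simp only [id_eq] at hux
    have hdist : A * (u - x) ≤ A * (2 * δ) := by gcongr; linarith
    have hAδ : A * δ = ε := by rw [hδ]; field_simp
    linarith [hdec x u hx (by linarith)]

/-- The relative error `θ x / x - c` of the approximation `θ x ≈ c * x`, as a function of
`u = log x`, cut off at `x = 1`. -/
noncomputable def logRelError (θ : ℝ → ℝ) (c u : ℝ) : ℝ :=
  Real.exp (-u) * θ (Real.exp u) - c * (Ici (0 : ℝ)).indicator 1 u

section WienerIkehara

variable {θ : ℝ → ℝ} {c B : ℝ}

theorem logRelError_of_neg (hθ0 : ∀ x < 1, θ x = 0) {u : ℝ} (hu : u < 0) :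
    logRelError θ c u = 0 := by
  simp [logRelError, hθ0 _ (Real.exp_lt_one_iff.mpr hu), hu.not_ge]

theorem logRelError_of_nonneg {u : ℝ} (hu : 0 ≤ u) :
    logRelError θ c u = Real.exp (-u) * θ (Real.exp u) - c := by
  simp [logRelError, hu]

theorem exp_neg_mul_le_of_le_mul (hθB : ∀ x, 0 ≤ x → θ x ≤ B * x) (u : ℝ) :
    Real.exp (-u) * θ (Real.exp u) ≤ B := by
  rw [Real.exp_neg, inv_mul_le_iff₀ (Real.exp_pos u)]
  exact (hθB _ (Real.exp_pos u).le).trans_eq (mul_comm _ _)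

theorem measurable_logRelError (hθ : Monotone θ) : Measurable (logRelError θ c) :=
  ((Real.measurable_exp.comp measurable_neg).mul (hθ.measurable.comp Real.measurable_exp)).sub
    ((measurable_one.indicator measurableSet_Ici).const_mul c)

theorem abs_logRelError_le (hθ0 : ∀ x, 0 ≤ θ x) (hθB : ∀ x, 0 ≤ x → θ x ≤ B * x) (u : ℝ) :
    |logRelError θ c u| ≤ B + |c| := by
  refine (abs_sub _ _).trans (add_le_add ?_ ?_)
  · rw [abs_of_nonneg (mul_nonneg (Real.exp_pos _).le (hθ0 _))]
    exact exp_neg_mul_le_of_le_mul hθB u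
  · by_cases hu : 0 ≤ u <;> simp [hu]

theorem logRelError_sub_le (hθ : Monotone θ) (hθ0 : ∀ x, 0 ≤ θ x)
    (hθB : ∀ x, 0 ≤ x → θ x ≤ B * x) {u w : ℝ} (hu : 0 ≤ u) (huw : u ≤ w) :
    logRelError θ c u - B * (w - u) ≤ logRelError θ c w := by
  rw [logRelError_of_nonneg hu, logRelError_of_nonneg (hu.trans huw)]
  suffices Real.exp (-u) * θ (Real.exp u) * (1 - (w - u)) ≤ Real.exp (-w) * θ (Real.exp w) by
    nlinarith [exp_neg_mul_le_of_le_mul hθB u]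
  calc Real.exp (-u) * θ (Real.exp u) * (1 - (w - u))
      ≤ Real.exp (-u) * θ (Real.exp u) * Real.exp (-(w - u)) := by
        gcongr
        · exact mul_nonneg (Real.exp_pos _).le (hθ0 _)
        · exact Real.one_sub_le_exp_neg _
    _ = Real.exp (-w) * θ (Real.exp u) := by
        rw [mul_right_comm, ← Real.exp_add]; ring_nf
    _ ≤ Real.exp (-w) * θ (Real.exp w) := by
        gcongr
        exact hθ (Real.exp_le_exp.mpr huw)

theorem fourier_exp_neg_mul_logRelError {s : ℂ} (hs : 0 < s.re) {m : ℂ}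
    (hθs : HasMellin (fun t => (θ t⁻¹ : ℂ)) (s + 1) m) :
    𝓕 (fun u => (Real.exp (-s.re * u) : ℂ) * (logRelError θ c u : ℂ)) (s.im / (2 * Real.pi)) =
      m - c / s := by
  have hcs := hasMellin_const_smul (hasMellin_one_Ioc hs).1 (c : ℂ)
  have hsub := hasMellin_sub ((MellinConvergent.cpow_smul (a := 1)).mpr hθs.1) hcs.1
  rw [mellin_cpow_smul, hθs.2, hcs.2, (hasMellin_one_Ioc hs).2] at hsub
  have heq (u : ℝ) : (logRelError θ c u : ℂ) =
      ((Real.exp (-u) : ℝ) : ℂ) ^ (1 : ℂ) • (θ (Real.exp (-u))⁻¹ : ℂ) -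
        (c : ℂ) • (Ioc (0 : ℝ) 1).indicator (fun _ => 1) (Real.exp (-u)) := by
    by_cases hu : 0 ≤ u <;> simp [logRelError, indicator, hu, ← Real.exp_neg, Real.exp_pos]
  simp_rw [heq, ← Complex.real_smul]
  rw [← mellin_eq_fourier (fun t : ℝ => (t : ℂ) ^ (1 : ℂ) • (θ t⁻¹ : ℂ) -
    (c : ℂ) • (Ioc (0 : ℝ) 1).indicator (fun _ => 1) t), hsub.2]
  simp [div_eq_mul_inv]

/-- The Laplace transform appears as the Mellin transform of `t ↦ θ (1 / t)`. -/
theorem wiener_ikehara {G : ℂ → ℂ} (hθ : Monotone θ)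
    (hθ0 : ∀ x < 1, θ x = 0) (hθB : ∀ x, 0 ≤ x → θ x ≤ B * x) (hG : ContinuousOn G {s | 1 ≤ s.re})
    (hθG : ∀ s : ℂ, 1 < s.re → HasMellin (fun t => (θ t⁻¹ : ℂ)) s (c / (s - 1) + G s)) :
    Tendsto (fun x => θ x / x) atTop (𝓝 c) := by
  have hθpos (x : ℝ) : 0 ≤ θ x := by
    rcases lt_or_ge x 1 with hx | hx
    · exact (hθ0 x hx).ge
    · exact (hθ0 0 zero_lt_one).ge.trans (hθ (by linarith))
  have hθB' (x : ℝ) (hx : 0 ≤ x) : θ x ≤ (B + 1) * x := by linarith [hθB x hx]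
  have hB : 0 ≤ B := by simpa using (hθpos 1).trans (hθB 1 zero_le_one)
  have hlaplace (σ : ℝ) (hσ : 0 < σ) (w : ℝ) :
      𝓕 (fun u => (Real.exp (-σ * u) : ℂ) * (logRelError θ c u : ℂ)) w =
        G (σ + 2 * Real.pi * w * Complex.I + 1) := by
    have hfourier := fourier_exp_neg_mul_logRelError (c := c) (s := σ + 2 * Real.pi * w * Complex.I)
      (by simpa using hσ) (hθG _ (by simpa using hσ))
    simpa [mul_div_cancel_left₀ w Real.two_pi_pos.ne'] using hfourier
  have hlim : Tendsto (logRelError θ c) atTop (𝓝 0) :=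
    tendsto_zero_of_continuous_laplace_boundary (by linarith) (measurable_logRelError hθ)
      (abs_logRelError_le hθpos hθB) (fun u => logRelError_of_neg hθ0)
      (G := fun s => G (s + 1)) (hG.comp (by fun_prop) fun s hs => by simpa using hs) hlaplace
      fun u w => logRelError_sub_le hθ hθpos hθB'
  have := (hlim.comp Real.tendsto_log_atTop).add_const c
  rw [zero_add] at this
  refine this.congr' ?_
  filter_upwards [eventually_ge_atTop 1] with x hx
  rw [Function.comp_apply, logRelError_of_nonneg (Real.log_nonneg hx), Real.exp_neg,
    Real.exp_log (by linarith)]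
  ring

end WienerIkehara

section Lattice

variable {E : Type*} [NormedAddCommGroup E] [NormedSpace ℝ E] [FiniteDimensional ℝ E]
  (L : Submodule ℤ E) [DiscreteTopology L]

section

variable [MeasurableSpace E] [BorelSpace E]

theorem exists_norm_le_isAddFundamentalDomain [IsZLattice ℝ L] (μ : Measure E) :
    ∃ (P : Set E) (R : ℝ), (∀ x ∈ P, ‖x‖ ≤ R) ∧ IsAddFundamentalDomain L P μ := by
  have : Module.Free ℤ L := ZLattice.module_free ℝ L
  have : Module.Finite ℤ L := ZLattice.module_finite ℝ L
  let b := Module.Free.chooseBasis ℤ L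
  obtain ⟨R, hR⟩ := isBounded_iff_forall_norm_le.1
    (ZSpan.fundamentalDomain_isBounded (b.ofZLatticeBasis ℝ))
  exact ⟨_, R, hR, ZLattice.isAddFundamentalDomain b μ⟩

variable {L} {μ : Measure E} [μ.IsAddHaarMeasure] {P : Set E} {R : ℝ}

open scoped Pointwise in
theorem hasSum_setIntegral_add (hP : IsAddFundamentalDomain L P μ) {f : E → ℝ}
    (hf : Integrable f μ) :
    HasSum (fun a : L => ∫ y in P, f (a + y) ∂μ) (∫ x, f x ∂μ) := by
  have : Countable L := countable_of_Lindelof_of_discrete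
  have : VAddInvariantMeasure L E μ :=
    inferInstanceAs <| VAddInvariantMeasure L.toAddSubgroup E μ
  have : MeasurableConstVAdd L E := inferInstanceAs <| MeasurableConstVAdd L.toAddSubgroup E
  have htranslates : HasSum (fun a : L => ∫ x in (a +ᵥ P : Set E), f x ∂μ) (∫ x, f x ∂μ) := by
    nth_rewrite 2 [← hP.sum_restrict]
    exact hasSum_integral_measure (by rwa [hP.sum_restrict])
  refine htranslates.congr_fun fun a => ?_
  exact ((measurePreserving_vadd a μ).setIntegral_image_emb
    (measurableEmbedding_const_vadd a) f P).symm

theorem abs_covolume_mul_tsum_sub_integral_le [IsZLattice ℝ L] (hP : IsAddFundamentalDomain L P μ)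
    (hR : ∀ x ∈ P, ‖x‖ ≤ R) {g : E → ℝ} {K : ℝ≥0} {ρ : ℝ} (hg : LipschitzWith K g)
    (hg0 : ∀ x, ρ < ‖x‖ → g x = 0) :
    |ZLattice.covolume L μ * ∑' a : L, g a - ∫ x, g x ∂μ| ≤
      K * R * μ.real (Metric.closedBall 0 (ρ + R)) := by
  have hPfin : μ P ≠ ⊤ := ((measure_mono fun x hx => by simpa using hR x hx).trans_lt
    (measure_closedBall_lt_top (x := (0 : E)) (r := R))).ne
  have hgi : Integrable g μ := hg.continuous.integrable_of_hasCompactSupport <|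
    HasCompactSupport.intro (isCompact_closedBall (0 : E) ρ) fun x hx => hg0 x (by simpa using hx)
  set B := Metric.closedBall (0 : E) (ρ + R)
  have hBi : Integrable (B.indicator fun _ => K * R) μ :=
    (integrable_indicator_iff Metric.isClosed_closedBall.measurableSet).mpr
      (integrableOn_const (hs := measure_closedBall_lt_top.ne))
  have hpoint (a : L) (y : E) (hy : y ∈ P) :
      ‖g a - g (a + y)‖ ≤ B.indicator (fun _ => K * R) (a + y) := by
    by_cases hB : (a : E) + y ∈ B
    · rw [indicator_of_mem hB]
      refine (hg.norm_sub_le _ _).trans ?_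
      gcongr
      simpa using hR y hy
    · have hfar : ρ + R < ‖(a : E) + y‖ := by simpa [B] using hB
      have := norm_add_le (a : E) y
      have := norm_nonneg y
      rw [indicator_of_notMem hB, hg0 a (by linarith [hR y hy]),
        hg0 (a + y) (by linarith [hR y hy]), sub_zero, norm_zero]
  have hcell (a : L) : ‖ZLattice.covolume L μ * g a - ∫ y in P, g (a + y) ∂μ‖ ≤
      ∫ y in P, B.indicator (fun _ => K * R) (a + y) ∂μ := by
    have hconst : IntegrableOn (fun _ : E => g a) P μ := integrableOn_const (hs := hPfin)
    rw [ZLattice.covolume_eq_measure_fundamentalDomain L μ hP, ← smul_eq_mul, ← setIntegral_const,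
      ← integral_sub hconst (hgi.comp_add_left (a : E)).integrableOn]
    refine norm_integral_le_of_norm_le (hBi.comp_add_left (a : E)).integrableOn ?_
    exact (ae_restrict_iff'₀ hP.nullMeasurableSet).mpr (ae_of_all _ (hpoint a))
  have hsumg := hasSum_setIntegral_add hP hgi
  have hsumB := hasSum_setIntegral_add hP hBi
  have hsum := (hsumB.summable.of_norm_bounded hcell).hasSum.add hsumg
  simp only [sub_add_cancel] at hsum
  have := tsum_of_norm_bounded hsumB hcell
  rwa [integral_indicator_const _ Metric.isClosed_closedBall.measurableSet, smul_eq_mul,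
    ← add_sub_cancel_right (tsum _) (∫ x, g x ∂μ), ← hsum.tsum_eq, _root_.tsum_mul_left,
    Real.norm_eq_abs, mul_comm (μ.real B)] at this

end

theorem exists_abs_tsum_inv_smul_sub_mul_pow_le [IsZLattice ℝ L] {g : E → ℝ} {K : ℝ≥0} {ρ : ℝ}
    (hg : LipschitzWith K g) (hg0 : ∀ x, ρ < ‖x‖ → g x = 0) :
    ∃ c C : ℝ, ∀ T : ℝ, 1 ≤ T →
      |∑' a : L, g (T⁻¹ • (a : E)) - c * T ^ Module.finrank ℝ E| ≤
        C * (T ^ Module.finrank ℝ E / T) := by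
  borelize E
  let μ : Measure E := Measure.addHaar
  obtain ⟨P, R, hR, hP⟩ := exists_norm_le_isAddFundamentalDomain L μ
  set n := Module.finrank ℝ E
  set v := ZLattice.covolume L μ
  have hv : 0 < v := ZLattice.covolume_pos L μ
  set V := (|ρ| + |R|) ^ n * μ.real (Metric.closedBall (0 : E) 1)
  refine ⟨(∫ x, g x ∂μ) / v, K * |R| * V / v, fun T hT => ?_⟩
  have hT0 : 0 < T := by linarith
  have hscaled : LipschitzWith (K * ‖T⁻¹‖₊) fun x => g (T⁻¹ • x) :=
    hg.comp (lipschitzWith_smul T⁻¹)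
  have hscaled0 (x : E) (hx : T * ρ < ‖x‖) : g (T⁻¹ • x) = 0 := hg0 _ <| by
    rwa [norm_smul, norm_inv, Real.norm_of_nonneg hT0.le, ← div_eq_inv_mul, lt_div_iff₀' hT0]
  have hball : μ.real (Metric.closedBall 0 (T * ρ + R)) ≤ T ^ n * V := by
    rw [← mul_assoc, ← mul_pow, ← Measure.addHaar_real_closedBall' μ 0 (by positivity)]
    refine measureReal_mono (Metric.closedBall_subset_closedBall ?_) measure_closedBall_lt_top.ne
    have hR : R ≤ T * |R| := (le_abs_self R).trans (le_mul_of_one_le_left (abs_nonneg R) hT)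
    linarith [mul_le_mul_of_nonneg_left (le_abs_self ρ) hT0.le]
  have hbound := abs_covolume_mul_tsum_sub_integral_le hP hR hscaled hscaled0
  rw [Measure.integral_comp_inv_smul, abs_of_pos (pow_pos hT0 _), smul_eq_mul] at hbound
  rw [show ∑' a : L, g (T⁻¹ • (a : E)) - (∫ x, g x ∂μ) / v * T ^ n =
      (v * ∑' a : L, g (T⁻¹ • (a : E)) - T ^ n * ∫ x, g x ∂μ) / v by field_simp,
    abs_div, abs_of_pos hv, div_le_iff₀ hv]
  refine hbound.trans ?_
  calc ((K * ‖T⁻¹‖₊ : ℝ≥0) : ℝ) * R * μ.real (Metric.closedBall 0 (T * ρ + R))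
      ≤ K * T⁻¹ * |R| * (T ^ n * V) := by
        rw [NNReal.coe_mul, coe_nnnorm, norm_inv, Real.norm_of_nonneg hT0.le]
        gcongr
        exact le_abs_self R
    _ = K * |R| * V / v * (T ^ n / T) * v := by field_simp

theorem exists_lipschitzWith_hasSum_add_eq_one [IsZLattice ℝ L] :
    ∃ (Φ : E → ℝ) (K : ℝ≥0) (ρ : ℝ), (∀ x, 0 ≤ Φ x) ∧ LipschitzWith K Φ ∧
      (∀ x, ρ < ‖x‖ → Φ x = 0) ∧ ∀ x, HasSum (fun a : L => Φ (a + x)) 1 := by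
  borelize E
  let μ : Measure E := Measure.addHaar
  obtain ⟨P, R, hR, hP⟩ := exists_norm_le_isAddFundamentalDomain L μ
  let b : ContDiffBump (0 : E) := default
  have hb : Integrable (b.normed μ) μ := b.integrable_normed
  obtain ⟨K, hK⟩ := ContDiff.lipschitzWith_of_hasCompactSupport (𝕂 := ℝ)
    b.hasCompactSupport_normed (b.contDiff_normed (μ := μ) (n := 1)) one_ne_zero
  have hPfin : μ P ≠ ⊤ := ((measure_mono fun x hx => by simpa using hR x hx).trans_lt
    (measure_closedBall_lt_top (x := (0 : E)) (r := R))).ne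
  refine ⟨fun x => ∫ y in P, b.normed μ (x + y) ∂μ, K * (μ P).toNNReal, b.rOut + R,
    fun x => integral_nonneg fun y => b.nonneg_normed _, ?_, fun x hx => ?_, fun x => ?_⟩
  · refine LipschitzWith.of_dist_le_mul fun x x' => ?_
    rw [dist_eq_norm, ← integral_sub (hb.comp_add_left x).integrableOn
      (hb.comp_add_left x').integrableOn]
    refine (norm_setIntegral_le_of_norm_le_const (C := K * dist x x') hPfin.lt_top
      fun y _ => ?_).trans_eq ?_
    · simpa [dist_eq_norm] using hK.norm_sub_le (x + y) (x' + y)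
    · push_cast; rw [measureReal_def]; ring!
  · refine setIntegral_eq_zero_of_forall_eq_zero fun y hy => ?_
    rw [← Function.notMem_support, b.support_normed_eq, mem_ball_zero_iff, not_lt]
    have := norm_sub_norm_le x (-y)
    rw [norm_neg, sub_neg_eq_add] at this
    linarith [hR y hy]
  · have := hasSum_setIntegral_add hP (hb.comp_add_left x)
    rw [integral_add_left_eq_self, b.integral_normed] at this
    simpa only [add_left_comm x, add_assoc] using this

theorem summable_inv_smul_of_lt_norm {f : E → ℝ} {ρ T : ℝ} (hT : 0 < T)
    (hf : ∀ x, ρ < ‖x‖ → f x = 0) : Summable fun a : L => f (T⁻¹ • (a : E)) := by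
  have : DiscreteTopology L.toAddSubgroup := ‹DiscreteTopology L›
  have hfin : (Metric.closedBall (0 : E) (T * ρ) ∩ L.toAddSubgroup).Finite :=
    Metric.finite_isBounded_inter_isClosed DiscreteTopology.isDiscrete
      Metric.isBounded_closedBall AddSubgroup.isClosed_of_discrete
  refine summable_of_hasFiniteSupport ((hfin.preimage Subtype.val_injective.injOn).subset
    fun a ha => ⟨?_, a.2⟩)
  by_contra h
  refine ha (hf _ ?_)
  rwa [mem_closedBall_zero_iff, not_le, ← lt_div_iff₀' hT, div_eq_inv_mul,
    ← Real.norm_of_nonneg (inv_nonneg.mpr hT.le), ← norm_smul] at h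

end Lattice

/-- The weight `y (1 - y)₊` given to an ideal of norm `y`: it is Lipschitz on `[0, ∞)`, vanishes
beyond `1`, and its Mellin transform `1 / ((s + 1) (s + 2))` has no zeros. -/
noncomputable def cutoff (y : ℝ) : ℝ := y * max (1 - y) 0

theorem cutoff_nonneg {y : ℝ} (hy : 0 ≤ y) : 0 ≤ cutoff y := mul_nonneg hy (le_max_right _ _)

theorem cutoff_le_self {y : ℝ} (hy : 0 ≤ y) : cutoff y ≤ y :=
  mul_le_of_le_one_right hy (max_le (by linarith) zero_le_one)

theorem cutoff_eq_zero {y : ℝ} (hy : 1 ≤ y) : cutoff y = 0 := by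
  rw [cutoff, max_eq_right (by linarith), mul_zero]

theorem abs_cutoff_sub_le {x y : ℝ} (hx : 0 ≤ x) (hy : 0 ≤ y) :
    |cutoff x - cutoff y| ≤ |x - y| := by
  wlog hxy : x ≤ y generalizing x y
  · rw [abs_sub_comm, abs_sub_comm x]
    exact this hy hx (le_of_not_ge hxy)
  rw [abs_sub_comm x, abs_of_nonneg (sub_nonneg.mpr hxy), abs_le]
  unfold cutoff
  rcases le_total y 1 with hy1 | hy1 <;> rcases le_total x 1 with hx1 | hx1 <;>
    simp only [max_eq_left, max_eq_right, sub_nonneg, sub_nonpos, hx1, hy1] <;>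
    constructor <;> nlinarith

theorem abs_log_sub_log_le_two_mul_div {a b : ℝ} (ha : 0 < a) (hab : |b - a| ≤ a / 2) :
    |Real.log b - Real.log a| ≤ 2 * |b - a| / a := by
  have hb : a / 2 ≤ b := by linarith [(abs_le.mp hab).1]
  have hb0 : 0 < b := by linarith
  have hle (x y : ℝ) (hx : 0 < x) (hy : a / 2 ≤ y) :
      Real.log x - Real.log y ≤ 2 * |x - y| / a := by
    have hy0 : 0 < y := by linarith
    calc Real.log x - Real.log y ≤ x / y - 1 := by
          rw [← Real.log_div hx.ne' hy0.ne']
          exact Real.log_le_sub_one_of_pos (div_pos hx hy0)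
      _ = (x - y) / y := by field_simp
      _ ≤ |x - y| / (a / 2) := by gcongr; exact le_abs_self _
      _ = 2 * |x - y| / a := by field_simp
  refine abs_sub_le_iff.mpr ⟨hle b a hb0 (by linarith), ?_⟩
  rw [abs_sub_comm]
  exact hle a b ha hb

theorem exists_lipschitzWith_of_conic_bound {E : Type*} [NormedAddCommGroup E] {f : E → ℝ}
    {B C δ : ℝ} (hδ : 0 < δ) (hB : ∀ x, |f x| ≤ B * ‖x‖)
    (hC : ∀ x y, f x ≠ 0 → ‖x - y‖ ≤ δ * ‖x‖ → |f x - f y| ≤ C * ‖x - y‖) :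
    ∃ K, LipschitzWith K f := by
  have hK (x y : E) : |f x - f y| ≤ (|C| + 2 * (|B| / δ)) * ‖x - y‖ := by
    have hClose : C * ‖x - y‖ ≤ (|C| + 2 * (|B| / δ)) * ‖x - y‖ := by
      gcongr
      exact (le_abs_self C).trans (le_add_of_nonneg_right (by positivity))
    have hfar (z : E) (hz : f z ≠ 0 → δ * ‖z‖ < ‖x - y‖) : |f z| ≤ |B| / δ * ‖x - y‖ := by
      rcases eq_or_ne (f z) 0 with h0 | h0
      · rw [h0, abs_zero]; positivity
      · calc |f z| ≤ |B| * ‖z‖ := (hB z).trans (by gcongr; exact le_abs_self B)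
          _ = |B| / δ * (δ * ‖z‖) := by field_simp
          _ ≤ |B| / δ * ‖x - y‖ := by gcongr; exact (hz h0).le
    by_cases hx : f x ≠ 0 ∧ ‖x - y‖ ≤ δ * ‖x‖
    · exact (hC x y hx.1 hx.2).trans hClose
    by_cases hy : f y ≠ 0 ∧ ‖x - y‖ ≤ δ * ‖y‖
    · rw [norm_sub_rev] at hy hClose ⊢
      rw [abs_sub_comm]
      exact (hC y x hy.1 hy.2).trans hClose
    push Not at hx hy
    calc |f x - f y| ≤ |f x| + |f y| := abs_sub _ _
      _ ≤ |B| / δ * ‖x - y‖ + |B| / δ * ‖x - y‖ := add_le_add (hfar x hx) (hfar y hy)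
      _ ≤ (|C| + 2 * (|B| / δ)) * ‖x - y‖ := by
        linarith [mul_nonneg (abs_nonneg C) (norm_nonneg (x - y))]
  exact ⟨_, LipschitzWith.of_dist_le' fun x y => by
    simpa only [dist_eq_norm, Real.norm_eq_abs] using hK x y⟩

section MixedSpace

open scoped Classical

open Module NumberField NumberField.mixedEmbedding NumberField.InfinitePlace NumberField.Units
  NumberField.Units.dirichletUnitTheorem

variable {K : Type*} [Field K] [NumberField K]

theorem normAtPlace_le_norm (w : InfinitePlace K) (x : mixedSpace K) : normAtPlace w x ≤ ‖x‖ := by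
  rw [norm_eq_sup'_normAtPlace]
  exact Finset.le_sup' (fun w => normAtPlace w x) (Finset.mem_univ w)

theorem abs_normAtPlace_sub_le (w : InfinitePlace K) (x y : mixedSpace K) :
    |normAtPlace w x - normAtPlace w y| ≤ ‖x - y‖ := by
  have hle (x y : mixedSpace K) : normAtPlace w x - normAtPlace w y ≤ ‖x - y‖ := by
    have := normAtPlace_add_le w (x - y) y
    rw [sub_add_cancel] at this
    linarith [normAtPlace_le_norm w (x - y)]
  exact abs_sub_le_iff.mpr ⟨hle x y, norm_sub_rev x y ▸ hle y x⟩

theorem norm_pos_of_ne_zero {x : mixedSpace K} (hx : mixedEmbedding.norm x ≠ 0) :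
    0 < mixedEmbedding.norm x :=
  (mixedEmbedding.norm_nonneg x).lt_of_ne' hx

theorem normAtPlace_pos_of_norm_ne_zero {x : mixedSpace K} (hx : mixedEmbedding.norm x ≠ 0)
    (w : InfinitePlace K) : 0 < normAtPlace w x :=
  (normAtPlace_nonneg w x).lt_of_ne' (mixedEmbedding.norm_ne_zero_iff.mp hx w)

theorem log_mixedEmbedding_norm {x : mixedSpace K} (hx : mixedEmbedding.norm x ≠ 0) :
    Real.log (mixedEmbedding.norm x) = ∑ w, (mult w : ℝ) * Real.log (normAtPlace w x) := by
  rw [mixedEmbedding.norm_apply, Real.log_prod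
    fun w _ => pow_ne_zero _ (mixedEmbedding.norm_ne_zero_iff.mp hx w)]
  simp only [Real.log_pow]

theorem sum_mult_eq_finrank : ∑ w : InfinitePlace K, (mult w : ℝ) = finrank ℚ K := by
  rw [← sum_mult_eq (K := K)]; push_cast; rfl

theorem one_le_mult_real {F : Type*} [Field F] (w : InfinitePlace F) : (1 : ℝ) ≤ mult w := by
  exact_mod_cast Nat.one_le_iff_ne_zero.mpr mult_ne_zero

variable (K) in
theorem one_le_finrank_real : (1 : ℝ) ≤ finrank ℚ K := by
  exact_mod_cast (finrank_pos : 0 < finrank ℚ K)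

/-- The deviation of `log |x|_w` from its mean; `logMap` records these numbers, scaled by `mult w`,
at all places but one. -/
noncomputable def logDeviation (x : mixedSpace K) (w : InfinitePlace K) : ℝ :=
  Real.log (normAtPlace w x) - Real.log (mixedEmbedding.norm x) * (finrank ℚ K : ℝ)⁻¹

theorem sum_mult_mul_logDeviation {x : mixedSpace K} (hx : mixedEmbedding.norm x ≠ 0) :
    ∑ w, mult w * logDeviation x w = 0 := by
  have hn := one_le_finrank_real K
  simp only [logDeviation, mul_sub, Finset.sum_sub_distrib]
  rw [← Finset.sum_mul, sum_mult_eq_finrank, ← log_mixedEmbedding_norm hx]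
  field_simp
  ring

theorem abs_logDeviation_le {x : mixedSpace K} (hx : mixedEmbedding.norm x ≠ 0)
    (w : InfinitePlace K) :
    |logDeviation x w| ≤ Fintype.card (InfinitePlace K) * ‖logMap x‖ := by
  have hle (w : InfinitePlace K) : |logDeviation x w| ≤ |mult w * logDeviation x w| := by
    rw [abs_mul, Nat.abs_cast]
    exact le_mul_of_one_le_left (abs_nonneg _) (one_le_mult_real w)
  have hother (w : InfinitePlace K) (hw : w ≠ w₀) : |mult w * logDeviation x w| ≤ ‖logMap x‖ := by
    have hcoord := norm_le_pi_norm (logMap x) ⟨w, hw⟩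
    rwa [logMap_apply, Real.norm_eq_abs] at hcoord
  refine (hle w).trans ?_
  by_cases hw : w = w₀
  · have hsum := sum_mult_mul_logDeviation hx
    rw [← Finset.add_sum_erase _ _ (Finset.mem_univ w)] at hsum
    rw [eq_neg_of_add_eq_zero_left hsum, abs_neg]
    calc |∑ v ∈ Finset.univ.erase w, mult v * logDeviation x v|
        ≤ ∑ v ∈ Finset.univ.erase w, |mult v * logDeviation x v| := Finset.abs_sum_le_sum_abs _ _
      _ ≤ (Finset.univ.erase w).card • ‖logMap x‖ := Finset.sum_le_card_nsmul _ _ _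
          fun v hv => hother v (hw ▸ Finset.ne_of_mem_erase hv)
      _ ≤ Fintype.card (InfinitePlace K) * ‖logMap x‖ := by
          rw [nsmul_eq_mul]
          gcongr
          exact Finset.card_le_univ _
  · refine (hother w hw).trans (le_mul_of_one_le_left (norm_nonneg _) ?_)
    exact_mod_cast Fintype.card_pos (α := InfinitePlace K)

theorem exp_neg_mul_norm_le_normAtPlace {x : mixedSpace K} (hx : mixedEmbedding.norm x ≠ 0)
    (w : InfinitePlace K) :
    Real.exp (-(2 * (Fintype.card (InfinitePlace K) * ‖logMap x‖))) * ‖x‖ ≤ normAtPlace w x := by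
  obtain ⟨v, -, hv⟩ := Finset.exists_mem_eq_sup' Finset.univ_nonempty fun w => normAtPlace w x
  rw [norm_eq_sup'_normAtPlace, hv, ← Real.exp_log (normAtPlace_pos_of_norm_ne_zero hx v),
    ← Real.exp_add, ← Real.le_log_iff_exp_le (normAtPlace_pos_of_norm_ne_zero hx w)]
  have hdiff : logDeviation x w - logDeviation x v =
      Real.log (normAtPlace w x) - Real.log (normAtPlace v x) := by
    unfold logDeviation; ring
  linarith [(abs_le.mp (abs_logDeviation_le hx w)).1, (abs_le.mp (abs_logDeviation_le hx v)).2]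

theorem mixedEmbedding_norm_le_norm {x : mixedSpace K} (hx : mixedEmbedding.norm x ≤ 1) :
    mixedEmbedding.norm x ≤ ‖x‖ := by
  rcases le_total 1 ‖x‖ with h1 | h1
  · exact hx.trans h1
  calc mixedEmbedding.norm x = ∏ w, normAtPlace w x ^ mult w := mixedEmbedding.norm_apply x
    _ ≤ ∏ w, ‖x‖ ^ mult w := Finset.prod_le_prod (fun w _ => pow_nonneg (normAtPlace_nonneg w x) _)
        fun w _ => pow_le_pow_left₀ (normAtPlace_nonneg w x) (normAtPlace_le_norm w x) _
    _ = ‖x‖ ^ finrank ℚ K := by rw [Finset.prod_pow_eq_pow_sum, sum_mult_eq]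
    _ ≤ ‖x‖ := pow_le_of_le_one (norm_nonneg x) h1 finrank_pos.ne'

/-- A function on the mixed space cutting off both coordinates of the decomposition into a
direction `logMap x` and a size `norm x`. -/
noncomputable def conicCutoff (Φ : logSpace K → ℝ) (x : mixedSpace K) : ℝ :=
  Φ (logMap x) * cutoff (mixedEmbedding.norm x)

theorem norm_ne_zero_of_conicCutoff_ne_zero {Φ : logSpace K → ℝ} {x : mixedSpace K}
    (hx : conicCutoff Φ x ≠ 0) : mixedEmbedding.norm x ≠ 0 := fun h =>
  hx (by rw [conicCutoff, h, cutoff, zero_mul, mul_zero])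

theorem norm_le_one_of_conicCutoff_ne_zero {Φ : logSpace K → ℝ} {x : mixedSpace K}
    (hx : conicCutoff Φ x ≠ 0) : mixedEmbedding.norm x ≤ 1 := by
  by_contra! h
  exact hx (by rw [conicCutoff, cutoff_eq_zero h.le, mul_zero])

section Perturbation

variable {x y : mixedSpace K} {ε : ℝ}

theorem abs_log_mixedEmbedding_norm_sub_le (hx : mixedEmbedding.norm x ≠ 0)
    (hy : mixedEmbedding.norm y ≠ 0)
    (h : ∀ w, |Real.log (normAtPlace w y) - Real.log (normAtPlace w x)| ≤ ε) :
    |Real.log (mixedEmbedding.norm y) - Real.log (mixedEmbedding.norm x)| ≤ finrank ℚ K * ε := by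
  rw [log_mixedEmbedding_norm hx, log_mixedEmbedding_norm hy, ← Finset.sum_sub_distrib,
    ← sum_mult_eq_finrank, Finset.sum_mul]
  refine (Finset.abs_sum_le_sum_abs _ _).trans (Finset.sum_le_sum fun w _ => ?_)
  rw [← mul_sub, abs_mul, Nat.abs_cast]
  exact mul_le_mul_of_nonneg_left (h w) (Nat.cast_nonneg _)

theorem norm_logMap_sub_le (hε : 0 ≤ ε) (hx : mixedEmbedding.norm x ≠ 0)
    (hy : mixedEmbedding.norm y ≠ 0)
    (h : ∀ w, |Real.log (normAtPlace w y) - Real.log (normAtPlace w x)| ≤ ε) :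
    ‖logMap x - logMap y‖ ≤ 4 * ε := by
  have hn := one_le_finrank_real K
  rw [norm_sub_rev]
  refine (pi_norm_le_iff_of_nonneg (by positivity)).mpr fun w => ?_
  have hmult : (mult w.1 : ℝ) ≤ 2 := by unfold mult; split_ifs <;> norm_num
  rw [Pi.sub_apply, logMap_apply, logMap_apply, ← mul_sub, Real.norm_eq_abs, abs_mul,
    Nat.abs_cast, sub_sub_sub_comm, ← sub_mul]
  calc mult w.1 * |Real.log (normAtPlace w.1 y) - Real.log (normAtPlace w.1 x) -
        (Real.log (mixedEmbedding.norm y) - Real.log (mixedEmbedding.norm x)) *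
          (finrank ℚ K : ℝ)⁻¹|
      ≤ 2 * (ε + finrank ℚ K * ε * (finrank ℚ K : ℝ)⁻¹) := by
        refine mul_le_mul hmult ((abs_sub _ _).trans (add_le_add (h w.1) ?_))
          (abs_nonneg _) zero_le_two
        rw [abs_mul, abs_of_nonneg (a := (finrank ℚ K : ℝ)⁻¹) (by positivity)]
        gcongr
        exact abs_log_mixedEmbedding_norm_sub_le hx hy h
    _ = 4 * ε := by field_simp; ring

theorem abs_mixedEmbedding_norm_sub_le (hε : finrank ℚ K * ε ≤ 1) (hx : mixedEmbedding.norm x ≠ 0)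
    (hy : mixedEmbedding.norm y ≠ 0)
    (h : ∀ w, |Real.log (normAtPlace w y) - Real.log (normAtPlace w x)| ≤ ε) :
    |mixedEmbedding.norm x - mixedEmbedding.norm y| ≤
      2 * finrank ℚ K * ε * mixedEmbedding.norm x := by
  have hlog := abs_log_mixedEmbedding_norm_sub_le hx hy h
  have hx0 := norm_pos_of_ne_zero hx
  set z := Real.log (mixedEmbedding.norm y) - Real.log (mixedEmbedding.norm x) with hz
  have hyx : mixedEmbedding.norm y = mixedEmbedding.norm x * Real.exp z := by
    rw [hz, Real.exp_sub, Real.exp_log (norm_pos_of_ne_zero hy), Real.exp_log hx0]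
    field_simp
  rw [abs_sub_comm]
  calc |mixedEmbedding.norm y - mixedEmbedding.norm x|
      = mixedEmbedding.norm x * |Real.exp z - 1| := by
        rw [hyx, ← mul_sub_one, abs_mul, abs_of_pos hx0]
    _ ≤ mixedEmbedding.norm x * (2 * (finrank ℚ K * ε)) := by
        gcongr
        exact (Real.abs_exp_sub_one_le (hlog.trans hε)).trans (by gcongr)
    _ = 2 * finrank ℚ K * ε * mixedEmbedding.norm x := by ring

end Perturbation

section ConicCutoff

variable {Φ : logSpace K → ℝ} {A : ℝ} {KΦ : ℝ≥0}

theorem abs_conicCutoff_le_norm (hΦ : ∀ v, |Φ v| ≤ 1) (x : mixedSpace K) :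
    |conicCutoff Φ x| ≤ ‖x‖ := by
  rcases eq_or_ne (conicCutoff Φ x) 0 with h0 | h0
  · rw [h0, abs_zero]; exact norm_nonneg x
  have hN := mixedEmbedding.norm_nonneg x
  rw [conicCutoff, abs_mul, abs_of_nonneg (cutoff_nonneg hN)]
  exact (mul_le_of_le_one_left (cutoff_nonneg hN) (hΦ _)).trans ((cutoff_le_self hN).trans
    (mixedEmbedding_norm_le_norm (norm_le_one_of_conicCutoff_ne_zero h0)))

variable (K) in
/-- On the cone `‖logMap x‖ ≤ A` every `|x|_w` is at least this multiple of `‖x‖`. -/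
noncomputable def coneConstant (A : ℝ) : ℝ :=
  Real.exp (-(2 * (Fintype.card (InfinitePlace K) * A)))

theorem coneConstant_mul_norm_le_normAtPlace (hA : ∀ v, A < ‖v‖ → Φ v = 0) {x : mixedSpace K}
    (hx : conicCutoff Φ x ≠ 0) (w : InfinitePlace K) :
    coneConstant K A * ‖x‖ ≤ normAtPlace w x := by
  have hxA : ‖logMap x‖ ≤ A := by
    by_contra! h
    exact hx (by rw [conicCutoff, hA _ h, zero_mul])
  refine le_trans ?_ (exp_neg_mul_norm_le_normAtPlace (norm_ne_zero_of_conicCutoff_ne_zero hx) w)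
  unfold coneConstant
  gcongr

theorem conicCutoff_eq_zero_of_lt_norm (hA : ∀ v, A < ‖v‖ → Φ v = 0) (x : mixedSpace K)
    (hx : (coneConstant K A)⁻¹ < ‖x‖) : conicCutoff Φ x = 0 := by
  by_contra h
  have hc : 0 < coneConstant K A := Real.exp_pos _
  have h1 : 1 < coneConstant K A * ‖x‖ := by rwa [inv_lt_iff_one_lt_mul₀' hc] at hx
  have hpow : 1 < mixedEmbedding.norm x :=
    calc 1 < (coneConstant K A * ‖x‖) ^ finrank ℚ K := one_lt_pow₀ h1 finrank_pos.ne'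
      _ = ∏ w : InfinitePlace K, (coneConstant K A * ‖x‖) ^ mult w := by
        rw [Finset.prod_pow_eq_pow_sum, sum_mult_eq]
      _ ≤ ∏ w, normAtPlace w x ^ mult w := Finset.prod_le_prod (fun w _ => by positivity)
        fun w _ => by
          gcongr
          exact coneConstant_mul_norm_le_normAtPlace hA h w
      _ = mixedEmbedding.norm x := (mixedEmbedding.norm_apply x).symm
  exact hpow.not_ge (norm_le_one_of_conicCutoff_ne_zero h)

theorem abs_conicCutoff_sub_le (hΦ : ∀ v, |Φ v| ≤ 1) (hK : LipschitzWith KΦ Φ)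
    {x y : mixedSpace K} {ε : ℝ} (hε0 : 0 ≤ ε) (hε : finrank ℚ K * ε ≤ 1)
    (hx : conicCutoff Φ x ≠ 0) (hy : mixedEmbedding.norm y ≠ 0)
    (h : ∀ w, |Real.log (normAtPlace w y) - Real.log (normAtPlace w x)| ≤ ε) :
    |conicCutoff Φ x - conicCutoff Φ y| ≤ (4 * KΦ + 2 * finrank ℚ K) * ε * ‖x‖ := by
  have hNx := norm_ne_zero_of_conicCutoff_ne_zero hx
  have hN0 := mixedEmbedding.norm_nonneg x
  have hNle := mixedEmbedding_norm_le_norm (norm_le_one_of_conicCutoff_ne_zero hx)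
  have hdir : |Φ (logMap x) - Φ (logMap y)| ≤ KΦ * (4 * ε) :=
    (hK.dist_le_mul _ _).trans (by
      rw [dist_eq_norm]; gcongr; exact norm_logMap_sub_le hε0 hNx hy h)
  have hsize : |cutoff (mixedEmbedding.norm x) - cutoff (mixedEmbedding.norm y)| ≤
      2 * finrank ℚ K * ε * mixedEmbedding.norm x :=
    (abs_cutoff_sub_le hN0 (mixedEmbedding.norm_nonneg y)).trans
      (abs_mixedEmbedding_norm_sub_le hε hNx hy h)
  have hcut : |cutoff (mixedEmbedding.norm x)| ≤ ‖x‖ := by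
    rw [abs_of_nonneg (cutoff_nonneg hN0)]
    exact (cutoff_le_self hN0).trans hNle
  calc |conicCutoff Φ x - conicCutoff Φ y|
      = |(Φ (logMap x) - Φ (logMap y)) * cutoff (mixedEmbedding.norm x) +
          Φ (logMap y) * (cutoff (mixedEmbedding.norm x) - cutoff (mixedEmbedding.norm y))| := by
        unfold conicCutoff; ring_nf
    _ ≤ KΦ * (4 * ε) * ‖x‖ + 1 * (2 * finrank ℚ K * ε * ‖x‖) := by
        refine (abs_add_le _ _).trans ?_
        rw [abs_mul, abs_mul]
        gcongr
        · exact hΦ _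
        · exact hsize.trans (by gcongr)
    _ = (4 * KΦ + 2 * finrank ℚ K) * ε * ‖x‖ := by ring

theorem exists_lipschitzWith_conicCutoff (hΦ : ∀ v, |Φ v| ≤ 1) (hK : LipschitzWith KΦ Φ)
    (hA : ∀ v, A < ‖v‖ → Φ v = 0) : ∃ C, LipschitzWith C (conicCutoff Φ) := by
  have hn := one_le_finrank_real K
  have hc : 0 < coneConstant K A := Real.exp_pos _
  refine exists_lipschitzWith_of_conic_bound (B := 1)
    (C := (4 * KΦ + 2 * finrank ℚ K) * (2 / coneConstant K A))
    (δ := coneConstant K A / (2 * finrank ℚ K)) (by positivity)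
    (fun x => (abs_conicCutoff_le_norm hΦ x).trans_eq (one_mul _).symm) fun x y hx hxy => ?_
  have hNx := norm_ne_zero_of_conicCutoff_ne_zero hx
  have hx0 : 0 < ‖x‖ := norm_pos_iff.mpr fun h => hNx (by rw [h, map_zero])
  have hplace (w : InfinitePlace K) : ‖x - y‖ ≤ normAtPlace w x / 2 :=
    calc ‖x - y‖ ≤ coneConstant K A / (2 * finrank ℚ K) * ‖x‖ := hxy
      _ ≤ coneConstant K A / 2 * ‖x‖ := by gcongr; linarith
      _ ≤ normAtPlace w x / 2 := by
        linarith [coneConstant_mul_norm_le_normAtPlace hA hx w]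
  have hdiff (w : InfinitePlace K) : |normAtPlace w y - normAtPlace w x| ≤ ‖x - y‖ :=
    norm_sub_rev x y ▸ abs_normAtPlace_sub_le w y x
  have hNy : mixedEmbedding.norm y ≠ 0 := mixedEmbedding.norm_ne_zero_iff.mpr fun w => by
    have hw0 := normAtPlace_pos_of_norm_ne_zero hNx w
    linarith [(abs_le.mp ((hdiff w).trans (hplace w))).1]
  refine (abs_conicCutoff_sub_le (ε := 2 * ‖x - y‖ / (coneConstant K A * ‖x‖)) hΦ hK
    (by positivity) ?_ hx hNy fun w => ?_).trans_eq ?_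
  · rw [← mul_div_assoc, div_le_one (by positivity)]
    calc finrank ℚ K * (2 * ‖x - y‖)
        ≤ finrank ℚ K * (2 * (coneConstant K A / (2 * finrank ℚ K) * ‖x‖)) := by gcongr
      _ = coneConstant K A * ‖x‖ := by field_simp
  · refine (abs_log_sub_log_le_two_mul_div (normAtPlace_pos_of_norm_ne_zero hNx w)
      ((hdiff w).trans (hplace w))).trans ?_
    gcongr
    · exact hdiff w
    · exact coneConstant_mul_norm_le_normAtPlace hA hx w
  · field_simp

end ConicCutoff

section Units

theorem hasSum_comp_mk_of_nonneg {G : Type*} [Group G] (H : Subgroup G) [Finite H]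
    {f : G ⧸ H → ℝ} {s : ℝ} (hf0 : ∀ q, 0 ≤ f q) (hf : HasSum f s) :
    HasSum (fun g : G => f g) (s * Nat.card H) := by
  cases nonempty_fintype H
  have hone : HasSum (fun _ : H => (1 : ℝ)) (Nat.card H) := by
    simpa only [Finset.sum_const, nsmul_one, Finset.card_univ, Nat.card_eq_fintype_card]
      using hasSum_fintype fun _ : H => (1 : ℝ)
  have hprod := hf.mul hone (hf.summable.mul_of_nonneg hone.summable hf0 fun _ => zero_le_one)
  rw [← (Subgroup.groupEquivQuotientProdSubgroup (s := H)).hasSum_iff] at hprod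
  simp only [Function.comp_def, mul_one] at hprod
  exact hprod

theorem hasSum_comp_logEmbedding {f : logSpace K → ℝ} {s : ℝ} (hf0 : ∀ v, 0 ≤ f v)
    (hf : HasSum (fun a : unitLattice K => f a) s) :
    HasSum (fun u : (𝓞 K)ˣ => f (logEmbedding K (Additive.ofMul u))) (s * torsionOrder K) := by
  have hquot : HasSum (fun q : (𝓞 K)ˣ ⧸ torsion K =>
      f (logEmbeddingEquiv K (Additive.ofMul q))) s :=
    ((logEmbeddingEquiv K).toEquiv.hasSum_iff (f := fun a : unitLattice K => f a)).mpr hf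
  exact hasSum_comp_mk_of_nonneg (torsion K) (fun _ => hf0 _) hquot

end Units

variable (K) in
/-- The units are smoothed out of the lattice point problem by a partition of unity for the unit
lattice. -/
theorem exists_lipschitzWith_hasSum_unit_smul : ∃ (F : mixedSpace K → ℝ) (C : ℝ≥0) (ρ : ℝ),
    F 0 = 0 ∧ LipschitzWith C F ∧ (∀ x, ρ < ‖x‖ → F x = 0) ∧
    ∀ x, mixedEmbedding.norm x ≠ 0 → ∀ T : ℝ, 0 < T →
      HasSum (fun u : (𝓞 K)ˣ => F (T⁻¹ • u • x))
        (torsionOrder K * cutoff (mixedEmbedding.norm x / T ^ finrank ℚ K)) := by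
  obtain ⟨Φ, KΦ, A, hΦ0, hΦK, hΦA, hΦ⟩ := exists_lipschitzWith_hasSum_add_eq_one (unitLattice K)
  have hΦ1 (v : logSpace K) : |Φ v| ≤ 1 := by
    rw [abs_of_nonneg (hΦ0 v)]
    simpa only [ZeroMemClass.coe_zero, zero_add] using
      le_hasSum (hΦ v) (0 : unitLattice K) fun _ _ => hΦ0 _
  obtain ⟨C, hC⟩ := exists_lipschitzWith_conicCutoff (K := K) hΦ1 hΦK hΦA
  refine ⟨conicCutoff Φ, C, (coneConstant K A)⁻¹, ?_, hC, conicCutoff_eq_zero_of_lt_norm hΦA,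
    fun x hx T hT => ?_⟩
  · rw [conicCutoff, map_zero, cutoff, zero_mul, mul_zero]
  have hsum := (hasSum_comp_logEmbedding (f := fun v => Φ (v + logMap x)) (fun _ => hΦ0 _)
    (hΦ (logMap x))).mul_right (cutoff (mixedEmbedding.norm x / T ^ finrank ℚ K))
  rw [one_mul] at hsum
  refine hsum.congr_fun fun u => ?_
  have hu : mixedEmbedding.norm (u • x) ≠ 0 := by rwa [norm_unit_smul]
  rw [conicCutoff, logMap_real_smul hu (inv_ne_zero hT.ne'), logMap_unit_smul u hx,
    mixedEmbedding.norm_smul, norm_unit_smul, abs_of_pos (inv_pos.mpr hT), inv_pow,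
    ← div_eq_inv_mul]

end MixedSpace

section IdealSum

open Module NumberField NumberField.mixedEmbedding NumberField.Units
open scoped nonZeroDivisors

theorem exists_generators_of_mk0_eq_inv {R : Type*} [CommRing R] [IsDedekindDomain R]
    {C : ClassGroup R} {J : (Ideal R)⁰} (hJ : ClassGroup.mk0 J = C⁻¹) :
    ∃ g : {I : (Ideal R)⁰ // ClassGroup.mk0 I = C} → R,
      (∀ I, Ideal.span {g I} = (I.1 : Ideal R) * J) ∧
      Function.Injective (fun p : {I : (Ideal R)⁰ // ClassGroup.mk0 I = C} × Rˣ => p.2 * g p.1) ∧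
      ∀ a ∈ (J : Ideal R), a ≠ 0 → ∃ I, ∃ u : Rˣ, u * g I = a := by
  have hprincipal (I : {I : (Ideal R)⁰ // ClassGroup.mk0 I = C}) :
      ∃ a : R, Ideal.span {a} = (I.1 : Ideal R) * J := by
    have hclass : ClassGroup.mk0 (I.1 * J) = 1 := by rw [map_mul, I.2, hJ, mul_inv_cancel]
    obtain ⟨a, ha⟩ := (ClassGroup.mk0_eq_one_iff (I.1 * J).2).mp hclass
    exact ⟨a, ha.symm⟩
  choose g hg using hprincipal
  have hg0 (I) : g I ≠ 0 := fun h => nonZeroDivisors.coe_ne_zero (I.1 * J) <| by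
    rw [Submonoid.coe_mul, ← hg, h, Ideal.span_singleton_zero, Ideal.zero_eq_bot]
  refine ⟨g, hg, ?_, fun a ha ha0 => ?_⟩
  · rintro ⟨I, u⟩ ⟨I', u'⟩ h
    have hspan := congrArg (fun a : R => Ideal.span {a}) h
    simp only [Ideal.span_singleton_mul_left_unit (Units.isUnit _), hg] at hspan
    obtain rfl : I = I' := Subtype.ext (Subtype.ext
      (mul_right_cancel₀ (nonZeroDivisors.coe_ne_zero J) hspan))
    exact Prod.ext rfl (Units.ext (mul_right_cancel₀ (hg0 I) h))
  · obtain ⟨I, hI⟩ := Ideal.dvd_span_singleton.mpr ha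
    obtain ⟨I₀, rfl⟩ : ∃ I₀ : (Ideal R)⁰, I₀ = I :=
      ⟨⟨I, mem_nonZeroDivisors_of_ne_zero fun h => ha0 <| by
        rwa [h, mul_zero, Ideal.zero_eq_bot, Ideal.span_singleton_eq_bot] at hI⟩, rfl⟩
    have hprincipal : ((J * I₀ : (Ideal R)⁰) : Ideal R).IsPrincipal :=
      ⟨a, by rw [Submonoid.coe_mul, ← hI]⟩
    have hclass : ClassGroup.mk0 I₀ = C := by
      have h1 := (ClassGroup.mk0_eq_one_iff (J * I₀).2).mpr hprincipal
      rwa [Subtype.coe_eta, map_mul, hJ, inv_mul_eq_one, eq_comm] at h1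
    obtain ⟨u, hu⟩ := Ideal.span_singleton_eq_span_singleton.mp
      ((hg ⟨I₀, hclass⟩).trans ((mul_comm _ _).trans hI.symm))
    exact ⟨_, u, (mul_comm _ _).trans hu⟩

variable {K : Type*} [Field K] [NumberField K]

theorem mixedEmbedding_norm_eq_of_span_eq_mul {a : 𝓞 K} {I J : Ideal (𝓞 K)}
    (h : Ideal.span {a} = I * J) :
    mixedEmbedding.norm (mixedEmbedding K (a : K)) = Ideal.absNorm I * Ideal.absNorm J := by
  rw [norm_eq_norm, ← Nat.cast_mul, ← map_mul, ← h, Ideal.absNorm_span_singleton,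
    ← Algebra.coe_norm_int, Nat.cast_natAbs]
  push_cast
  rfl

theorem hasSum_idealClass_of_hasSum_unit_smul {C : ClassGroup (𝓞 K)} {J : (Ideal (𝓞 K))⁰}
    (hJ : ClassGroup.mk0 J = C⁻¹) {f : mixedSpace K → ℝ} {φ : ℝ → ℝ} (hf0 : f 0 = 0)
    (hf : Summable fun a : idealLattice K (FractionalIdeal.mk0 K J) => f a)
    (hφ : ∀ x, mixedEmbedding.norm x ≠ 0 →
      HasSum (fun u : (𝓞 K)ˣ => f (u • x)) (φ (mixedEmbedding.norm x))) :
    HasSum (fun I : {I : (Ideal (𝓞 K))⁰ // ClassGroup.mk0 I = C} =>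
        φ (Ideal.absNorm (I.1 : Ideal (𝓞 K)) * Ideal.absNorm (J : Ideal (𝓞 K))))
      (∑' a : idealLattice K (FractionalIdeal.mk0 K J), f a) := by
  obtain ⟨g, hg, hinj, hsurj⟩ := exists_generators_of_mk0_eq_inv hJ
  have hgJ (I) : g I ∈ (J : Ideal (𝓞 K)) :=
    Ideal.dvd_span_singleton.mp (Dvd.intro_left _ (hg I).symm)
  let e (p : {I : (Ideal (𝓞 K))⁰ // ClassGroup.mk0 I = C} × (𝓞 K)ˣ) :
      idealLattice K (FractionalIdeal.mk0 K J) :=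
    ⟨mixedEmbedding K ((p.2 * g p.1 : 𝓞 K) : K), (mem_idealLattice K _).mpr ⟨_, by
      rw [FractionalIdeal.coe_mk0]
      exact (FractionalIdeal.mem_coeIdeal _).mpr ⟨_, Ideal.mul_mem_left _ _ (hgJ p.1), rfl⟩, rfl⟩⟩
  have he : Function.Injective e := fun p q h => hinj <| RingOfIntegers.coe_injective <|
    mixedEmbedding_injective K (congrArg Subtype.val h)
  have hrange (a) (ha : a ∉ range e) : f a = 0 := by
    obtain ⟨y, hy, hya⟩ := (mem_idealLattice K _).mp a.2
    rw [FractionalIdeal.coe_mk0] at hy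
    obtain ⟨b, hb, rfl⟩ := (FractionalIdeal.mem_coeIdeal _).mp hy
    rcases eq_or_ne b 0 with rfl | hb0
    · rw [← hya, map_zero, map_zero, hf0]
    · obtain ⟨I, u, hu⟩ := hsurj b hb hb0
      exact absurd ⟨(I, u), Subtype.ext (by rw [← hya, ← hu])⟩ ha
  refine ((he.hasSum_iff hrange).mpr hf.hasSum).prod_fiberwise fun I => ?_
  have hnorm := mixedEmbedding_norm_eq_of_span_eq_mul (hg I)
  have hunits := hφ (mixedEmbedding K (g I : K)) (hnorm ▸ by
    exact_mod_cast mul_ne_zero (Ideal.absNorm_ne_zero_of_nonZeroDivisors I.1)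
      (Ideal.absNorm_ne_zero_of_nonZeroDivisors J))
  rw [hnorm] at hunits
  refine hunits.congr_fun fun u => ?_
  rw [unitSMul_smul, ← map_mul]
  rfl

theorem exists_hasSum_cutoff_idealClass (C : ClassGroup (𝓞 K)) : ∃ c D : ℝ, ∀ X : ℝ, 1 ≤ X →
    ∃ S : ℝ, HasSum (fun I : {I : (Ideal (𝓞 K))⁰ // ClassGroup.mk0 I = C} =>
        cutoff (Ideal.absNorm (I.1 : Ideal (𝓞 K)) / X)) S ∧
      |S - c * X| ≤ D * X ^ (1 - (finrank ℚ K : ℝ)⁻¹) := by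
  classical
  obtain ⟨J, hJ⟩ := ClassGroup.mk0_surjective C⁻¹
  obtain ⟨F, _, ρ, hF0, hFlip, hFsupp, hFunits⟩ := exists_lipschitzWith_hasSum_unit_smul K
  obtain ⟨c, D, hlattice⟩ := exists_abs_tsum_inv_smul_sub_mul_pow_le
    (idealLattice K (FractionalIdeal.mk0 K J)) hFlip hFsupp
  rw [mixedEmbedding.finrank] at hlattice
  set n := finrank ℚ K
  set q := (Ideal.absNorm (J : Ideal (𝓞 K)) : ℝ) with hq
  set t := (torsionOrder K : ℝ)
  have hq1 : 1 ≤ q := Nat.one_le_cast.mpr (Ideal.absNorm_pos_of_nonZeroDivisors J)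
  have ht0 : 0 < t := Nat.cast_pos.mpr (torsionOrder_pos K)
  refine ⟨c * q / t, D * q ^ (1 - (n : ℝ)⁻¹) / t, fun X hX => ?_⟩
  have hXq : 1 ≤ X * q := one_le_mul_of_one_le_of_one_le hX hq1
  set T := (X * q) ^ (n : ℝ)⁻¹ with hT
  have hT1 : 1 ≤ T := Real.one_le_rpow hXq (by positivity)
  have hTn : T ^ n = X * q := Real.rpow_inv_natCast_pow (by linarith) finrank_pos.ne'
  have hTn' : T ^ n / T = q ^ (1 - (n : ℝ)⁻¹) * X ^ (1 - (n : ℝ)⁻¹) := by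
    rw [← Real.mul_rpow (by linarith) (by linarith), mul_comm q X, Real.rpow_sub (by linarith),
      Real.rpow_one, hTn]
  have hclass := hasSum_idealClass_of_hasSum_unit_smul hJ (f := fun x => F (T⁻¹ • x))
    (φ := fun y => t * cutoff (y / T ^ n)) (by rw [smul_zero, hF0])
    (summable_inv_smul_of_lt_norm _ (by linarith) hFsupp) fun x hx => hFunits x hx T (by linarith)
  specialize hlattice T hT1
  refine ⟨_, (hclass.div_const t).congr_fun fun I => ?_, ?_⟩
  · rw [mul_div_cancel_left₀ _ ht0.ne', hTn, ← hq, mul_div_mul_right _ _ (by linarith)]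
  · rw [hTn', hTn] at hlattice
    rw [show ∀ S : ℝ, S / t - c * q / t * X = (S - c * (X * q)) / t by intro S; ring, abs_div,
      abs_of_pos ht0, div_mul_eq_mul_div, mul_assoc D]
    gcongr

theorem summable_cutoff_absNorm_div {X : ℝ} (hX : 0 < X) :
    Summable fun I : (Ideal (𝓞 K))⁰ => cutoff (Ideal.absNorm (I : Ideal (𝓞 K)) / X) := by
  refine summable_of_hasFiniteSupport ((Ideal.finite_setOfPred_absNorm_le₀ ⌊X⌋₊).subset
    fun I hI => ?_)
  by_contra h
  refine hI (cutoff_eq_zero ?_)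
  rw [one_le_div hX]
  exact ((Nat.floor_lt hX.le).mp (not_le.mp h)).le

variable (K) in
theorem exists_abs_tsum_cutoff_sub_mul_le : ∃ c D : ℝ, ∀ X : ℝ, 1 ≤ X →
    |∑' I : (Ideal (𝓞 K))⁰, cutoff (Ideal.absNorm (I : Ideal (𝓞 K)) / X) - c * X| ≤
      D * X ^ (1 - (finrank ℚ K : ℝ)⁻¹) := by
  choose c D h using exists_hasSum_cutoff_idealClass (K := K)
  refine ⟨∑ C, c C, ∑ C, D C, fun X hX => ?_⟩
  choose S hS hS' using fun C => h C X hX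
  have hsum := (summable_cutoff_absNorm_div (K := K) (by linarith : 0 < X)).hasSum
  have hfibres := ((Equiv.sigmaFiberEquiv
    (fun I : (Ideal (𝓞 K))⁰ => ClassGroup.mk0 I)).hasSum_iff.mpr hsum).sigma hS
  rw [hfibres.unique (hasSum_fintype S), Finset.sum_mul, Finset.sum_mul, ← Finset.sum_sub_distrib]
  exact (Finset.abs_sum_le_sum_abs _ _).trans (Finset.sum_le_sum fun C _ => hS' C)

end IdealSum

section Mellin

theorem integrable_tsum_of_summable_integral_norm {ι α E : Type*} [Countable ι]
    [MeasurableSpace α] {μ : Measure α} [NormedAddCommGroup E] {F : ι → α → E}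
    (hF : ∀ i, Integrable (F i) μ) (hsum : Summable fun i => ∫ a, ‖F i a‖ ∂μ)
    (hpt : ∀ᵐ a ∂μ, Summable fun i => F i a) : Integrable (fun a => ∑' i, F i a) μ := by
  refine ⟨aestronglyMeasurable_of_tendsto_ae atTop
    (fun S => Finset.aestronglyMeasurable_fun_sum S fun i _ => (hF i).1)
    (hpt.mono fun a ha => ha.hasSum), ?_⟩
  calc ∫⁻ a, ‖∑' i, F i a‖ₑ ∂μ ≤ ∫⁻ a, ∑' i, ‖F i a‖ₑ ∂μ :=
        lintegral_mono fun a => enorm_tsum_le_tsum_enorm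
    _ = ∑' i, ENNReal.ofReal (∫ a, ‖F i a‖ ∂μ) := by
        rw [lintegral_tsum fun i => (hF i).1.enorm]
        simp only [ofReal_integral_norm_eq_lintegral_enorm (hF _)]
    _ < ⊤ := hsum.tsum_ofReal_lt_top

theorem integral_norm_cpow_smul_comp_mul_left (w : ℝ → ℂ) (s : ℂ) {n : ℝ} (hn : 0 < n) :
    ∫ t in Ioi (0 : ℝ), ‖(t : ℂ) ^ (s - 1) • w (n * t)‖ =
      ‖(n : ℂ) ^ (-s)‖ * ∫ t in Ioi (0 : ℝ), ‖(t : ℂ) ^ (s - 1) • w t‖ := by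
  have hscale (t : ℝ) (ht : t ∈ Ioi 0) : ‖(t : ℂ) ^ (s - 1) • w (n * t)‖ =
      ‖(n : ℂ) ^ (-s)‖ * n * ‖((n * t : ℝ) : ℂ) ^ (s - 1) • w (n * t)‖ := by
    have hone : ‖(n : ℂ) ^ (-s)‖ * n * ‖(n : ℂ) ^ (s - 1)‖ = 1 := by
      rw [Complex.norm_cpow_eq_rpow_re_of_pos hn, Complex.norm_cpow_eq_rpow_re_of_pos hn,
        ← Real.rpow_add_one hn.ne', ← Real.rpow_add hn]
      simp
    rw [Complex.ofReal_mul, Complex.mul_cpow_ofReal_nonneg hn.le (le_of_lt ht)]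
    simp only [smul_eq_mul, norm_mul]
    linear_combination (-‖(t : ℂ) ^ (s - 1)‖ * ‖w (n * t)‖) * hone
  rw [setIntegral_congr_fun measurableSet_Ioi hscale, integral_const_mul,
    integral_comp_mul_left_Ioi (fun t : ℝ => ‖(t : ℂ) ^ (s - 1) • w t‖) 0 hn, mul_zero,
    smul_eq_mul, mul_assoc, mul_inv_cancel_left₀ hn.ne']

theorem hasMellin_tsum_comp_mul {ι : Type*} [Countable ι] {a : ι → ℂ} {n : ι → ℝ} {w : ℝ → ℂ}
    {s : ℂ} (hn : ∀ i, 0 < n i) (hw : MellinConvergent w s)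
    (hsum : Summable fun i => a i * (n i : ℂ) ^ (-s))
    (hpt : ∀ t, 0 < t → Summable fun i => a i * w (n i * t)) :
    HasMellin (fun t => ∑' i, a i * w (n i * t)) s
      ((∑' i, a i * (n i : ℂ) ^ (-s)) * mellin w s) := by
  let F (i : ι) (t : ℝ) : ℂ := (t : ℂ) ^ (s - 1) • (a i * w (n i * t))
  have hF (i : ι) : IntegrableOn (F i) (Ioi 0) :=
    ((MellinConvergent.comp_mul_left (hn i)).mpr hw).const_smul (a i)
  have hFnorm (i : ι) : ∫ t in Ioi 0, ‖F i t‖ =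
      ‖a i * (n i : ℂ) ^ (-s)‖ * ∫ t in Ioi (0 : ℝ), ‖(t : ℂ) ^ (s - 1) • w t‖ := by
    rw [norm_mul, mul_assoc, ← integral_norm_cpow_smul_comp_mul_left w s (hn i),
      ← integral_const_mul]
    simp only [F, smul_eq_mul, norm_mul, mul_left_comm]
  have hFsum : Summable fun i => ∫ t in Ioi 0, ‖F i t‖ := by
    simp only [hFnorm]
    exact hsum.norm.mul_right _
  have htsum (t : ℝ) : ∑' i, F i t = (t : ℂ) ^ (s - 1) • ∑' i, a i * w (n i * t) :=
    tsum_const_smul'' _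
  constructor
  · have := integrable_tsum_of_summable_integral_norm hF hFsum
      ((ae_restrict_mem measurableSet_Ioi).mono fun t ht => (hpt t ht).const_smul _)
    simp only [htsum] at this
    exact this
  · rw [mellin, ← setIntegral_congr_fun measurableSet_Ioi fun t _ => htsum t,
      ← integral_tsum_of_summable_integral_norm hF hFsum, ← tsum_mul_right]
    refine tsum_congr fun i => ?_
    calc ∫ t in Ioi 0, F i t = mellin (fun t => a i • w (n i * t)) s := rfl
      _ = a i * (n i : ℂ) ^ (-s) * mellin w s := by
        rw [mellin_const_smul, mellin_comp_mul_left _ _ (hn i), smul_eq_mul, smul_eq_mul,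
          mul_assoc]

end Mellin

section DedekindZeta

open Module NumberField
open scoped nonZeroDivisors

variable (K : Type*) [Field K] [NumberField K]

theorem sum_card_absNorm_eq (n : ℕ) :
    ∑ m ∈ Finset.Icc 1 n, Nat.card {I : Ideal (𝓞 K) // Ideal.absNorm I = m} =
      Nat.card {I : (Ideal (𝓞 K))⁰ // Ideal.absNorm (I : Ideal (𝓞 K)) ≤ n} := by
  have (m : ℕ) : Finite {I : Ideal (𝓞 K) // Ideal.absNorm I = m} :=
    Ideal.finite_setOfPred_absNorm_eq m
  rw [← Finset.sum_coe_sort, ← Nat.card_sigma]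
  refine Nat.card_congr
    { toFun := fun ⟨m, I, hI⟩ => ⟨⟨I, mem_nonZeroDivisors_iff_ne_zero.mpr fun h0 => ?_⟩, ?_⟩
      invFun := fun ⟨I, hI⟩ => ⟨⟨_, Finset.mem_Icc.mpr
        ⟨Ideal.absNorm_pos_of_nonZeroDivisors I, hI⟩⟩, I, rfl⟩
      left_inv := fun ⟨⟨_, _⟩, _, rfl⟩ => rfl
      right_inv := fun _ => rfl }
  · have := (Finset.mem_Icc.mp m.2).1
    rw [← hI, h0, Ideal.zero_eq_bot, Ideal.absNorm_bot] at this
    omega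
  · exact hI.trans_le (Finset.mem_Icc.mp m.2).2

variable {K} in
theorem LSeriesSummable_card_absNorm_eq {s : ℂ} (hs : 1 < s.re) :
    LSeriesSummable (fun n => (Nat.card {I : Ideal (𝓞 K) // Ideal.absNorm I = n} : ℂ)) s := by
  refine LSeriesSummable_of_sum_norm_bigO (r := 1) ?_ zero_le_one hs
  simp only [Complex.norm_natCast, Real.rpow_one, ← Nat.cast_sum, sum_card_absNorm_eq]
  refine Asymptotics.isBigO_of_div_tendsto_nhds
    ((eventually_ne_atTop 0).mono fun n hn h0 => absurd (Nat.cast_eq_zero.mp h0) hn) _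
    (((NumberField.Ideal.tendsto_norm_le_div_atTop₀ K).comp
      tendsto_natCast_atTop_atTop).congr fun n => ?_)
  simp only [Function.comp_apply, Nat.cast_le, Pi.div_apply]

variable {K} in
theorem hasSum_absNorm_cpow {s : ℂ} (hs : 1 < s.re) :
    HasSum (fun I : Ideal (𝓞 K) => (Ideal.absNorm I : ℂ) ^ (-s)) (dedekindZeta K s) := by
  let N : Ideal (𝓞 K) → ℕ := Ideal.absNorm
  have hs0 : s ≠ 0 := by rintro rfl; norm_num at hs
  have (n : ℕ) : Finite {I // N I = n} := Ideal.finite_setOfPred_absNorm_eq n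
  have hfibre (n : ℕ) : (∑' _ : {I // N I = n}, (n : ℂ) ^ (-s)) =
      LSeries.term (fun n => (Nat.card {I // N I = n} : ℂ)) s n := by
    rw [tsum_const, nsmul_eq_mul, LSeries.term_def, Complex.cpow_neg, ← div_eq_mul_inv]
    split_ifs with hn
    · rw [hn, Nat.cast_zero, Complex.zero_cpow hs0, div_zero]
    · rfl
  have hN : (fun I => (N I : ℂ) ^ (-s)) ∘ Equiv.sigmaFiberEquiv N =
      fun p : Σ n, {I // N I = n} => (p.1 : ℂ) ^ (-s) := by
    funext ⟨n, I, hI⟩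
    simp [Equiv.sigmaFiberEquiv, hI]
  have hsum : Summable fun p : Σ n, {I // N I = n} => (p.1 : ℂ) ^ (-s) := by
    refine Summable.of_norm ((summable_sigma_of_nonneg fun _ => norm_nonneg _).mpr
      ⟨fun n => Summable.of_finite, ?_⟩)
    refine (LSeriesSummable_card_absNorm_eq (K := K) hs).norm.congr fun n => ?_
    rw [← hfibre]
    simp only [tsum_const, nsmul_eq_mul, norm_mul, Complex.norm_natCast]
  rw [← (Equiv.sigmaFiberEquiv N).hasSum_iff, hN]
  convert hsum.hasSum using 1
  rw [hsum.tsum_sigma]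
  exact tsum_congr fun n => (hfibre n).symm

end DedekindZeta

section Continuation

theorem hasMellin_congr {E : Type*} [NormedAddCommGroup E] [NormedSpace ℂ E] {f g : ℝ → E}
    {s : ℂ} {m : E} (h : EqOn f g (Ioi 0)) (hf : HasMellin f s m) : HasMellin g s m := by
  have hfg : EqOn (fun t : ℝ => (t : ℂ) ^ (s - 1) • f t) (fun t => (t : ℂ) ^ (s - 1) • g t)
    (Ioi 0) := fun t ht => congrArg _ (h ht)
  exact ⟨IntegrableOn.congr_fun hf.1 hfg measurableSet_Ioi,
    (setIntegral_congr_fun measurableSet_Ioi hfg).symm.trans hf.2⟩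

theorem locallyIntegrableOn_of_mellinConvergent {f : ℝ → ℂ} {s : ℂ}
    (hf : MellinConvergent f s) : LocallyIntegrableOn f (Ioi 0) := by
  have hcont : ContinuousOn (fun t : ℝ => (t : ℂ) ^ (1 - s)) (Ioi 0) := fun t ht =>
    (Complex.continuousAt_ofReal_cpow_const t _ (Or.inr (ne_of_gt ht))).continuousWithinAt
  refine (LocallyIntegrableOn.continuousOn_mul (IntegrableOn.locallyIntegrableOn hf) hcont
    isOpen_Ioi.isLocallyClosed).congr (ae_restrict_of_forall_mem measurableSet_Ioi fun t ht => ?_)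
  have ht0 : (t : ℂ) ≠ 0 := Complex.ofReal_ne_zero.mpr (ne_of_gt ht)
  rw [smul_eq_mul, ← mul_assoc, ← Complex.cpow_add _ _ ht0, sub_add_sub_cancel', sub_self,
    Complex.cpow_zero, one_mul]

theorem exists_differentiableOn_hasMellin {T : ℝ → ℂ} {c : ℂ} {α D : ℝ} (hα : α < 1)
    {σ : ℝ} (hT : MellinConvergent T σ) (hT0 : ∀ t, 1 ≤ t → T t = 0)
    (hTc : ∀ t, 0 < t → t ≤ 1 → ‖T t - c / t‖ ≤ D * t ^ (-α)) :
    ∃ G : ℂ → ℂ, DifferentiableOn ℂ G {s | α < s.re} ∧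
      ∀ s : ℂ, 1 < s.re → HasMellin T s (c / (s - 1) + G s) := by
  let pole : ℝ → ℂ := (Ioc 0 1).indicator fun t => (t : ℂ) ^ (-1 : ℂ)
  have hpole (s : ℂ) (hs : 1 < s.re) : HasMellin (fun t => c • pole t) s (c / (s - 1)) := by
    have h := hasMellin_cpow_Ioc (-1) (s := s) (by simpa using hs)
    have := hasMellin_const_smul h.1 c
    rwa [h.2, smul_eq_mul, mul_one_div, ← sub_eq_add_neg] at this
  let E (t : ℝ) : ℂ := T t - c • pole t
  have hEloc : LocallyIntegrableOn E (Ioi 0) := (locallyIntegrableOn_of_mellinConvergent hT).sub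
    (locallyIntegrableOn_of_mellinConvergent (hpole 2 (by norm_num)).1)
  have hEtop (b : ℝ) : E =O[atTop] fun t => t ^ (-b) := by
    refine Filter.EventuallyEq.trans_isBigO (f₂ := 0) ?_ (Asymptotics.isBigO_zero _ _)
    filter_upwards [eventually_gt_atTop 1] with t ht
    simp [E, pole, hT0 t ht.le, not_le.mpr ht]
  have hEzero : E =O[𝓝[>] 0] fun t => t ^ (-α) := by
    refine Asymptotics.IsBigO.of_bound D ?_
    filter_upwards [Ioc_mem_nhdsGT one_pos] with t ht
    rw [Real.norm_of_nonneg (Real.rpow_nonneg ht.1.le _)]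
    simpa [E, pole, ht, ht.1, ht.2, Complex.cpow_neg_one, div_eq_mul_inv] using hTc t ht.1 ht.2
  refine ⟨mellin E, fun s hs => (mellin_differentiableAt_of_isBigO_rpow hEloc (hEtop _)
    (lt_add_one _) hEzero hs).differentiableWithinAt, fun s hs => ?_⟩
  have hE : MellinConvergent E s := mellinConvergent_of_isBigO_rpow hEloc (hEtop _)
    (lt_add_one _) hEzero (hα.trans hs)
  have h := hasMellin_add (hpole s hs).1 hE
  rw [(hpole s hs).2] at h
  exact hasMellin_congr (fun t _ => by simp [E]) h

theorem hasMellin_cutoff {s : ℂ} (hs : -1 < s.re) :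
    HasMellin (fun t => (cutoff t : ℂ)) s (1 / ((s + 1) * (s + 2))) := by
  have h1 := hasMellin_cpow_Ioc 1 (s := s) (by simpa using by linarith)
  have h2 := hasMellin_cpow_Ioc 2 (s := s) (by simpa using by linarith)
  have h := hasMellin_sub h1.1 h2.1
  have hs1 : s + 1 ≠ 0 := fun h => by simp [eq_neg_of_add_eq_zero_left h] at hs
  have hs2 : s + 2 ≠ 0 := fun h => by norm_num [eq_neg_of_add_eq_zero_left h] at hs
  rw [h1.2, h2.2, show 1 / (s + 1) - 1 / (s + 2) = 1 / ((s + 1) * (s + 2)) by field_simp; ring]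
    at h
  refine hasMellin_congr (fun t (ht : 0 < t) => ?_) h
  rcases le_or_gt t 1 with ht1 | ht1
  · simp only [Complex.cpow_one, mem_Ioc, ht, ht1, and_self, indicator_of_mem, Complex.cpow_ofNat,
      cutoff, sub_nonneg, sup_of_le_left, Complex.ofReal_mul, Complex.ofReal_sub,
      Complex.ofReal_one]
    ring
  · simp [cutoff_eq_zero ht1.le, not_le.mpr ht1]

end Continuation

section DedekindZetaContinuation

open Module NumberField
open scoped nonZeroDivisors

variable (K : Type*) [Field K] [NumberField K]

instance countable_ideal : Countable (Ideal (𝓞 K)) :=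
  have (n : ℕ) : Finite {I : Ideal (𝓞 K) // Ideal.absNorm I = n} :=
    Ideal.finite_setOfPred_absNorm_eq n
  (Equiv.sigmaFiberEquiv (Ideal.absNorm : Ideal (𝓞 K) → ℕ)).symm.injective.countable

variable {K} in
theorem hasMellin_tsum_cutoff_absNorm {s : ℂ} (hs : 1 < s.re) :
    HasMellin (fun t => ∑' I : (Ideal (𝓞 K))⁰,
        (cutoff (Ideal.absNorm (I : Ideal (𝓞 K)) * t) : ℂ)) s
      (dedekindZeta K s * (1 / ((s + 1) * (s + 2)))) := by
  have hs0 : -s ≠ 0 := by rw [neg_ne_zero]; rintro rfl; norm_num at hs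
  have hsupp : Function.support (fun I : Ideal (𝓞 K) => (Ideal.absNorm I : ℂ) ^ (-s)) ⊆
      {I | I ∈ (Ideal (𝓞 K))⁰} := fun I hI => by
    rw [mem_ofPred_eq, mem_nonZeroDivisors_iff_ne_zero]
    rintro rfl
    exact hI (by simp [Complex.zero_cpow hs0])
  have hzeta := (hasSum_subtype_iff_of_support_subset hsupp).mpr (hasSum_absNorm_cpow hs)
  have hw := hasMellin_cutoff (s := s) (by linarith)
  have hpt (t : ℝ) (ht : 0 < t) : Summable fun I : (Ideal (𝓞 K))⁰ =>
      1 * (cutoff ((Ideal.absNorm (I : Ideal (𝓞 K)) : ℝ) * t) : ℂ) := by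
    simpa [div_inv_eq_mul] using
      Complex.ofRealCLM.summable (summable_cutoff_absNorm_div (K := K) (inv_pos.mpr ht))
  have h := hasMellin_tsum_comp_mul (a := fun _ => 1)
    (n := fun I : (Ideal (𝓞 K))⁰ => (Ideal.absNorm (I : Ideal (𝓞 K)) : ℝ)) (s := s)
    (fun I => Nat.cast_pos.mpr (Ideal.absNorm_pos_of_nonZeroDivisors I)) hw.1
    (by simpa using! hzeta.summable) hpt
  rw [hw.2] at h
  simpa only [one_mul, Complex.ofReal_natCast, ← hzeta.tsum_eq] using! h

theorem exists_differentiableOn_dedekindZeta_eq : ∃ α < 1, ∃ (c : ℂ) (G : ℂ → ℂ),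
    DifferentiableOn ℂ G {s | α < s.re} ∧ ∀ s : ℂ, 1 < s.re →
      dedekindZeta K s = (s + 1) * (s + 2) * (c / (s - 1) + G s) := by
  obtain ⟨c, D, hcD⟩ := exists_abs_tsum_cutoff_sub_mul_le K
  have hn : (0 : ℝ) < (finrank ℚ K : ℝ)⁻¹ := by
    have := finrank_pos (R := ℚ) (M := K)
    positivity
  set α := 1 - (finrank ℚ K : ℝ)⁻¹
  have hα : α < 1 := sub_lt_self 1 hn
  have hT0 (t : ℝ) (ht : 1 ≤ t) : ∑' I : (Ideal (𝓞 K))⁰,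
      (cutoff (Ideal.absNorm (I : Ideal (𝓞 K)) * t) : ℂ) = 0 := by
    refine (tsum_congr fun I => ?_).trans tsum_zero
    rw [cutoff_eq_zero, Complex.ofReal_zero]
    exact one_le_mul_of_one_le_of_one_le
      (Nat.one_le_cast.mpr (Ideal.absNorm_pos_of_nonZeroDivisors I)) ht
  have hTc (t : ℝ) (ht : 0 < t) (ht1 : t ≤ 1) : ‖∑' I : (Ideal (𝓞 K))⁰,
      (cutoff (Ideal.absNorm (I : Ideal (𝓞 K)) * t) : ℂ) - (c : ℂ) / t‖ ≤ D * t ^ (-α) := by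
    have := hcD t⁻¹ (one_le_inv₀ ht |>.mpr ht1)
    rw [Real.inv_rpow ht.le, ← Real.rpow_neg ht.le] at this
    rw [← Complex.ofReal_tsum, ← Complex.ofReal_div, ← Complex.ofReal_sub, Complex.norm_real]
    simpa only [Real.norm_eq_abs, div_inv_eq_mul, div_eq_mul_inv c] using this
  obtain ⟨G, hG, hmellin⟩ := exists_differentiableOn_hasMellin (σ := 2) hα
    (hasMellin_tsum_cutoff_absNorm (K := K) (by norm_num)).1 hT0 hTc
  refine ⟨α, hα, c, G, hG, fun s hs => ?_⟩
  have hs1 : s + 1 ≠ 0 := fun h => by simp [eq_neg_of_add_eq_zero_left h] at hs; linarith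
  have hs2 : s + 2 ≠ 0 := fun h => by norm_num [eq_neg_of_add_eq_zero_left h] at hs
  rw [← (hmellin s hs).2, (hasMellin_tsum_cutoff_absNorm hs).2]
  field_simp

theorem exists_differentiableOn_eq_sub_one_mul_dedekindZeta : ∃ α < 1, ∃ H : ℂ → ℂ,
    DifferentiableOn ℂ H {s | α < s.re} ∧ H 1 ≠ 0 ∧
      ∀ s : ℂ, 1 < s.re → H s = (s - 1) * dedekindZeta K s := by
  obtain ⟨α, hα, c, G, hG, hζ⟩ := exists_differentiableOn_dedekindZeta_eq K
  let H (s : ℂ) : ℂ := (s + 1) * (s + 2) * (c + (s - 1) * G s)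
  have hH : DifferentiableOn ℂ H {s | α < s.re} := by fun_prop
  have hHζ (s : ℂ) (hs : 1 < s.re) : H s = (s - 1) * dedekindZeta K s := by
    have hs1 : s - 1 ≠ 0 := fun h => by simp [sub_eq_zero.mp h] at hs
    rw [hζ s hs]
    simp only [H]
    field_simp
  refine ⟨α, hα, H, hH, ?_, hHζ⟩
  have hcont : ContinuousAt (fun σ : ℝ => H σ) 1 :=
    ((hH.differentiableAt ((isOpen_lt continuous_const Complex.continuous_re).mem_nhds
      (by simpa using hα))).continuousAt).comp' Complex.continuous_ofReal.continuousAt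
  have hlim : Tendsto (fun σ : ℝ => H σ) (𝓝[>] 1) (𝓝 (dedekindZeta_residue K : ℂ)) :=
    (tendsto_sub_one_mul_dedekindZeta_nhdsGT K).congr' (by
      filter_upwards [self_mem_nhdsWithin] with σ hσ
      rw [hHζ _ (by simpa using hσ)])
  rw [show H 1 = dedekindZeta_residue K from tendsto_nhds_unique
    (by simpa using hcont.tendsto.mono_left nhdsWithin_le_nhds) hlim]
  exact_mod_cast dedekindZeta_residue_ne_zero K

end DedekindZetaContinuation

section EulerProduct

variable {R F : Type*} [CommRing R] [IsDedekindDomain R] [NormedField F] [CompleteSpace F]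
  {f : Ideal R →*₀ F}

theorem prod_one_sub_mul_tsum_eq_tsum_indicator (hf : Summable fun I => ‖f I‖)
    (S : Finset (HeightOneSpectrum R)) :
    (∏ P ∈ S, (1 - f P.asIdeal)) * ∑' I, f I =
      ∑' I, {I : Ideal R | ∀ P ∈ S, ¬ P.asIdeal ∣ I}.indicator f I := by
  classical
  induction S using Finset.induction_on with
  | empty => simp
  | insert Q S hQS ih =>
    let A : Set (Ideal R) := {I | ∀ P ∈ S, ¬ P.asIdeal ∣ I}
    let D : Set (Ideal R) := {I | Q.asIdeal ∣ I}
    have hsum (B : Set (Ideal R)) : Summable (B.indicator f) := hf.of_norm.indicator B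
    have hA (J : Ideal R) : Q.asIdeal * J ∈ A ↔ J ∈ A :=
      forall₂_congr fun P hP => not_congr
        ⟨fun h => (P.prime.dvd_or_dvd h).resolve_left fun hPQ => hQS <| by
          rwa [← HeightOneSpectrum.ext
            (associated_iff_eq.mp (P.prime.associated_of_dvd Q.prime hPQ))],
        fun h => h.mul_left _⟩
    have hmul (J : Ideal R) :
        (A ∩ D).indicator f (Q.asIdeal * J) = f Q.asIdeal * A.indicator f J := by
      have hD : Q.asIdeal * J ∈ D := dvd_mul_right _ _
      by_cases hJ : J ∈ A
      · rw [indicator_of_mem (show _ ∈ A ∩ D from ⟨(hA J).mpr hJ, hD⟩), indicator_of_mem hJ,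
          map_mul]
      · rw [indicator_of_notMem fun h => hJ ((hA J).mp h.1), indicator_of_notMem hJ, mul_zero]
    have hdvd : ∑' I, (A ∩ D).indicator f I = f Q.asIdeal * ∑' I, A.indicator f I := by
      rw [← tsum_mul_left, ← (mul_right_injective₀ Q.ne_bot).tsum_eq]
      · exact tsum_congr hmul
      · intro I hI
        obtain ⟨J, rfl⟩ := (mem_of_indicator_ne_zero hI).2
        exact ⟨J, rfl⟩
    have hinsert : {I : Ideal R | ∀ P ∈ insert Q S, ¬ P.asIdeal ∣ I} = A \ (A ∩ D) := by
      ext I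
      simp [A, D, and_comm]
    rw [Finset.prod_insert hQS, mul_assoc, ih, hinsert, indicator_sdiff inter_subset_left]
    simp only [Pi.sub_apply]
    rw [(hsum A).tsum_sub (hsum (A ∩ D)), hdvd]
    ring

theorem tendsto_prod_one_sub_mul_tsum (hf : Summable fun I => ‖f I‖) :
    Tendsto (fun S : Finset (HeightOneSpectrum R) =>
      (∏ P ∈ S, (1 - f P.asIdeal)) * ∑' I, f I) atTop (𝓝 1) := by
  simp only [prod_one_sub_mul_tsum_eq_tsum_indicator hf]
  rw [← map_one f, ← tsum_ite_eq (1 : Ideal R) f]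
  refine tendsto_tsum_of_dominated_convergence hf (fun I => ?_)
    (Eventually.of_forall fun S I => norm_indicator_le_norm_self _ _)
  rcases eq_or_ne I 0 with rfl | hI0
  · refine tendsto_const_nhds.congr fun S => ?_
    rw [map_zero, ite_self, indicator_apply_eq_zero.mpr fun _ => map_zero f]
  rcases eq_or_ne I 1 with rfl | hI1
  · refine tendsto_const_nhds.congr fun S => ?_
    rw [if_pos rfl, indicator_of_mem fun P _ h => P.prime.not_isUnit (isUnit_of_dvd_one h)]
  · obtain ⟨P, hP, hIP⟩ := Ideal.exists_le_maximal I (Ideal.one_eq_top (R := R) ▸ hI1)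
    let Q : HeightOneSpectrum R := ⟨P, hP.isPrime, fun h => hI0 (by simpa [h] using hIP)⟩
    refine tendsto_const_nhds.congr' ?_
    filter_upwards [eventually_ge_atTop {Q}] with S hS
    rw [if_neg hI1, indicator_of_notMem]
    exact fun h => h Q (Finset.singleton_subset_iff.mp hS) (Ideal.dvd_iff_le.mpr hIP)

theorem tsum_ideal_ne_zero (hf : Summable fun I => ‖f I‖) : ∑' I, f I ≠ 0 := fun h => by
  have := tendsto_prod_one_sub_mul_tsum hf
  simp only [h, mul_zero] at this
  exact zero_ne_one (tendsto_nhds_unique tendsto_const_nhds this)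

theorem hasProd_one_sub_inv_tsum (hf : Summable fun I => ‖f I‖) :
    HasProd (fun P : HeightOneSpectrum R => 1 - f P.asIdeal) (∑' I, f I)⁻¹ := by
  have := (tendsto_prod_one_sub_mul_tsum hf).mul_const (∑' I, f I)⁻¹
  simpa only [mul_inv_cancel_right₀ (tsum_ideal_ne_zero hf), one_mul] using! this

end EulerProduct

section LogDeriv

open Module NumberField

variable (K : Type*) [Field K] [NumberField K]

variable {K} in
theorem two_le_absNorm (P : HeightOneSpectrum (𝓞 K)) : 2 ≤ Ideal.absNorm P.asIdeal := by
  have h0 : Ideal.absNorm P.asIdeal ≠ 0 := Ideal.absNorm_eq_zero_iff.not.mpr P.ne_bot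
  have h1 : Ideal.absNorm P.asIdeal ≠ 1 := Ideal.absNorm_eq_one_iff.not.mpr P.isPrime.ne_top
  lia

variable {K} in
theorem norm_absNorm_cpow (P : HeightOneSpectrum (𝓞 K)) (s : ℂ) :
    ‖(Ideal.absNorm P.asIdeal : ℂ) ^ (-s)‖ = (Ideal.absNorm P.asIdeal : ℝ) ^ (-s.re) := by
  rw [Complex.norm_natCast_cpow_of_pos (by linarith [two_le_absNorm P]), Complex.neg_re]

variable {K} in
theorem norm_absNorm_cpow_le_half (P : HeightOneSpectrum (𝓞 K)) {s : ℂ} (hs : 1 ≤ s.re) :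
    ‖(Ideal.absNorm P.asIdeal : ℂ) ^ (-s)‖ ≤ 1 / 2 := by
  have hP : (2 : ℝ) ≤ Ideal.absNorm P.asIdeal := Nat.ofNat_le_cast.mpr (two_le_absNorm P)
  calc ‖(Ideal.absNorm P.asIdeal : ℂ) ^ (-s)‖ ≤ (Ideal.absNorm P.asIdeal : ℝ) ^ (-1 : ℝ) := by
        rw [norm_absNorm_cpow]
        exact Real.rpow_le_rpow_of_exponent_le (by linarith) (by linarith)
    _ ≤ 1 / 2 := by
        rw [Real.rpow_neg_one, one_div]
        exact inv_anti₀ two_pos hP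

variable {K} in
theorem norm_inv_one_sub_absNorm_cpow_le (P : HeightOneSpectrum (𝓞 K)) {s : ℂ}
    (hs : 1 ≤ s.re) : ‖(1 - (Ideal.absNorm P.asIdeal : ℂ) ^ (-s))⁻¹‖ ≤ 2 := by
  have h := norm_sub_norm_le 1 ((Ideal.absNorm P.asIdeal : ℂ) ^ (-s))
  rw [norm_inv]
  refine inv_le_of_inv_le₀ two_pos ?_
  linarith [norm_absNorm_cpow_le_half P hs, norm_one (α := ℂ)]

variable {K} in
theorem one_sub_absNorm_cpow_ne_zero (P : HeightOneSpectrum (𝓞 K)) {s : ℂ} (hs : 1 ≤ s.re) :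
    1 - (Ideal.absNorm P.asIdeal : ℂ) ^ (-s) ≠ 0 := fun h => by
  have := norm_absNorm_cpow_le_half P hs
  rw [← sub_eq_zero.mp h] at this
  norm_num at this

theorem summable_absNorm_rpow {σ : ℝ} (hσ : 1 < σ) :
    Summable fun P : HeightOneSpectrum (𝓞 K) => (Ideal.absNorm P.asIdeal : ℝ) ^ (-σ) := by
  refine ((hasSum_absNorm_cpow (K := K) (s := σ) (by simpa using hσ)).summable.norm.comp_injective
    (fun P Q => HeightOneSpectrum.ext : Function.Injective HeightOneSpectrum.asIdeal)).congr
    fun P => ?_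
  simp only [Function.comp_apply, norm_absNorm_cpow, Complex.ofReal_re]

theorem summable_log_absNorm_mul_rpow {σ : ℝ} (hσ : 1 < σ) :
    Summable fun P : HeightOneSpectrum (𝓞 K) =>
      Real.log (Ideal.absNorm P.asIdeal) * (Ideal.absNorm P.asIdeal : ℝ) ^ (-σ) := by
  let δ := (σ - 1) / 2
  have hδ : 0 < δ := by simp only [δ]; linarith
  refine ((summable_absNorm_rpow K (σ := σ - δ) (by simp only [δ]; linarith)).mul_left
    δ⁻¹).of_nonneg_of_le (fun P => by positivity) fun P => ?_
  have hP : (0 : ℝ) < Ideal.absNorm P.asIdeal := by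
    exact_mod_cast zero_lt_two.trans_le (two_le_absNorm P)
  calc Real.log (Ideal.absNorm P.asIdeal) * (Ideal.absNorm P.asIdeal : ℝ) ^ (-σ)
      ≤ (Ideal.absNorm P.asIdeal : ℝ) ^ δ / δ * (Ideal.absNorm P.asIdeal : ℝ) ^ (-σ) := by
        gcongr
        exact Real.log_le_rpow_div hP.le hδ
    _ = δ⁻¹ * (Ideal.absNorm P.asIdeal : ℝ) ^ (-(σ - δ)) := by
        rw [neg_sub, Real.rpow_sub hP, Real.rpow_neg hP.le]
        ring

variable {K} in
theorem differentiableAt_dedekindZeta {s : ℂ} (hs : 1 < s.re) :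
    DifferentiableAt ℂ (dedekindZeta K) s := by
  obtain ⟨σ, hσ, hσs⟩ := exists_between hs
  refine (LSeries_hasDerivAt (lt_of_le_of_lt ?_ (EReal.coe_lt_coe hσs))).differentiableAt
  simpa using (LSeriesSummable_card_absNorm_eq (K := K) (s := σ)
    (by simpa using hσ)).abscissaOfAbsConv_le

variable {K} in
theorem hasProd_one_sub_absNorm_cpow {s : ℂ} (hs : 1 < s.re) :
    dedekindZeta K s ≠ 0 ∧
      HasProd (fun P : HeightOneSpectrum (𝓞 K) => 1 - (Ideal.absNorm P.asIdeal : ℂ) ^ (-s))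
        (dedekindZeta K s)⁻¹ := by
  have hs0 : s ≠ 0 := by rintro rfl; norm_num at hs
  let f : Ideal (𝓞 K) →*₀ ℂ := (riemannZetaSummandHom hs0).comp Ideal.absNorm
  have hf (I : Ideal (𝓞 K)) : f I = (Ideal.absNorm I : ℂ) ^ (-s) := rfl
  have hsum := hasSum_absNorm_cpow (K := K) hs
  simp only [← hf] at hsum ⊢
  rw [← hsum.tsum_eq]
  exact ⟨tsum_ideal_ne_zero hsum.summable.norm, hasProd_one_sub_inv_tsum hsum.summable.norm⟩

variable {K} in
theorem logDeriv_one_sub_absNorm_cpow (P : HeightOneSpectrum (𝓞 K)) (s : ℂ) :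
    logDeriv (fun s => 1 - (Ideal.absNorm P.asIdeal : ℂ) ^ (-s)) s =
      Real.log (Ideal.absNorm P.asIdeal) * (Ideal.absNorm P.asIdeal : ℂ) ^ (-s) *
        (1 - (Ideal.absNorm P.asIdeal : ℂ) ^ (-s))⁻¹ := by
  have hP : (Ideal.absNorm P.asIdeal : ℂ) ≠ 0 := by
    exact_mod_cast (zero_lt_two.trans_le (two_le_absNorm P)).ne'
  have h := ((hasDerivAt_neg s).const_cpow (Or.inl hP)).const_sub 1
  rw [logDeriv_apply, h.deriv, ← Complex.ofReal_natCast, Complex.ofReal_log (Nat.cast_nonneg _)]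
  ring

variable {K} in
theorem summable_logDeriv_one_sub_absNorm_cpow {s : ℂ} (hs : 1 < s.re) :
    Summable fun P : HeightOneSpectrum (𝓞 K) =>
      logDeriv (fun s => 1 - (Ideal.absNorm P.asIdeal : ℂ) ^ (-s)) s := by
  refine .of_norm_bounded ((summable_log_absNorm_mul_rpow K hs).mul_right 2) fun P => ?_
  rw [logDeriv_one_sub_absNorm_cpow, norm_mul, norm_mul, norm_absNorm_cpow, Complex.norm_real,
    Real.norm_of_nonneg (Real.log_natCast_nonneg _)]
  gcongr
  exact norm_inv_one_sub_absNorm_cpow_le P hs.le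

variable {K} in
theorem logDeriv_dedekindZeta_eq_neg_tsum {s : ℂ} (hs : 1 < s.re) :
    logDeriv (dedekindZeta K) s = -∑' P : HeightOneSpectrum (𝓞 K),
      logDeriv (fun s => 1 - (Ideal.absNorm P.asIdeal : ℂ) ^ (-s)) s := by
  obtain ⟨σ, hσ, hσs⟩ := exists_between hs
  have hU : IsOpen {z : ℂ | σ < z.re} := isOpen_lt continuous_const Complex.continuous_re
  have hdiff (P : HeightOneSpectrum (𝓞 K)) :
      Differentiable ℂ fun z : ℂ => (Ideal.absNorm P.asIdeal : ℂ) ^ (-z) := by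
    have : NeZero (Ideal.absNorm P.asIdeal : ℂ) :=
      ⟨by exact_mod_cast (zero_lt_two.trans_le (two_le_absNorm P)).ne'⟩
    fun_prop
  have hprod : MultipliableLocallyUniformlyOn
      (fun (P : HeightOneSpectrum (𝓞 K)) z => 1 - (Ideal.absNorm P.asIdeal : ℂ) ^ (-z))
      {z : ℂ | σ < z.re} := by
    simp only [sub_eq_add_neg]
    refine (summable_absNorm_rpow K hσ).multipliableLocallyUniformlyOn_one_add hU
      (.of_forall fun P z hz => ?_) fun P => (hdiff P).continuous.neg.continuousOn
    rw [norm_neg, norm_absNorm_cpow]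
    exact Real.rpow_le_rpow_of_exponent_le
      (Nat.one_le_cast.mpr (one_le_two.trans (two_le_absNorm P))) (neg_le_neg (le_of_lt hz))
  have htprod (z : ℂ) (hz : 1 < z.re) := (hasProd_one_sub_absNorm_cpow (K := K) hz).2.tprod_eq
  have hinv : (fun z => ∏' P : HeightOneSpectrum (𝓞 K),
      (1 - (Ideal.absNorm P.asIdeal : ℂ) ^ (-z))) =ᶠ[𝓝 s] (dedekindZeta K · ^ (-1 : ℤ)) := by
    filter_upwards [hU.mem_nhds hσs] with z hz
    rw [htprod z (hσ.trans hz), zpow_neg_one]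
  rw [← logDeriv_tprod_eq_tsum hU hσs (fun P => one_sub_absNorm_cpow_ne_zero P hs.le)
    (fun P => ((hdiff P).const_sub 1).differentiableOn)
    (summable_logDeriv_one_sub_absNorm_cpow hs) hprod
    (by simpa only [htprod s hs] using inv_ne_zero (hasProd_one_sub_absNorm_cpow hs).1),
    (logDeriv_congr_nhds hinv).eq_of_nhds, logDeriv_fun_zpow (differentiableAt_dedekindZeta hs)]
  simp

theorem exists_continuousOn_hasSum_log_absNorm_mul_cpow :
    ∃ R : ℂ → ℂ, ContinuousOn R {s | 1 ≤ s.re} ∧ ∀ s : ℂ, 1 < s.re →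
      HasSum (fun P : HeightOneSpectrum (𝓞 K) =>
        Real.log (Ideal.absNorm P.asIdeal) * (Ideal.absNorm P.asIdeal : ℂ) ^ (-s))
        (-logDeriv (dedekindZeta K) s - R s) := by
  let r (P : HeightOneSpectrum (𝓞 K)) (s : ℂ) : ℂ :=
    Real.log (Ideal.absNorm P.asIdeal) * (Ideal.absNorm P.asIdeal : ℂ) ^ (-(2 * s)) *
      (1 - (Ideal.absNorm P.asIdeal : ℂ) ^ (-s))⁻¹
  have hP0 (P : HeightOneSpectrum (𝓞 K)) : (Ideal.absNorm P.asIdeal : ℂ) ≠ 0 := by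
    exact_mod_cast (zero_lt_two.trans_le (two_le_absNorm P)).ne'
  have hbound (P : HeightOneSpectrum (𝓞 K)) (s : ℂ) (hs : 1 ≤ s.re) : ‖r P s‖ ≤
      Real.log (Ideal.absNorm P.asIdeal) * (Ideal.absNorm P.asIdeal : ℝ) ^ (-2 : ℝ) * 2 := by
    rw [norm_mul, norm_mul, norm_absNorm_cpow, Complex.norm_real,
      Real.norm_of_nonneg (Real.log_natCast_nonneg _)]
    gcongr
    · exact Nat.one_le_cast.mpr (one_le_two.trans (two_le_absNorm P))
    · simpa using hs
    · exact norm_inv_one_sub_absNorm_cpow_le P hs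
  have hu := (summable_log_absNorm_mul_rpow K one_lt_two).mul_right 2
  have hcont (P : HeightOneSpectrum (𝓞 K)) : ContinuousOn (r P) {s | 1 ≤ s.re} := by
    have : NeZero (Ideal.absNorm P.asIdeal : ℂ) := ⟨hP0 P⟩
    exact ContinuousOn.mul (by fun_prop)
      (ContinuousOn.inv₀ (by fun_prop) fun s hs => one_sub_absNorm_cpow_ne_zero P hs)
  refine ⟨fun s => ∑' P, r P s, continuousOn_tsum hcont hu hbound, fun s hs => ?_⟩
  have hr : Summable fun P => r P s := .of_norm_bounded hu fun P => hbound P s hs.le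
  rw [logDeriv_dedekindZeta_eq_neg_tsum hs, neg_neg]
  refine ((summable_logDeriv_one_sub_absNorm_cpow hs).hasSum.sub hr.hasSum).congr_fun fun P => ?_
  have h1 := one_sub_absNorm_cpow_ne_zero P hs.le
  simp only [r]
  rw [logDeriv_one_sub_absNorm_cpow, show -(2 * s) = -s + -s by ring,
    Complex.cpow_add _ _ (hP0 P)]
  field_simp

end LogDeriv

section Nonvanishing

theorem tendsto_sub_mul_logDeriv {f : ℂ → ℂ} {z₀ : ℂ} (hf : AnalyticAt ℂ f z₀)
    (htop : analyticOrderAt f z₀ ≠ ⊤) :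
    Tendsto (fun z => (z - z₀) * logDeriv f z) (𝓝[≠] z₀) (𝓝 (analyticOrderNatAt f z₀)) := by
  obtain ⟨g, hg, hg0, hfg⟩ := hf.analyticOrderAt_ne_top.mp htop
  set m := analyticOrderNatAt f z₀
  have hlog : ∀ᶠ z in 𝓝[≠] z₀, m + (z - z₀) * (deriv g z / g z) = (z - z₀) * logDeriv f z := by
    filter_upwards [nhdsWithin_le_nhds (logDeriv_congr_nhds hfg), self_mem_nhdsWithin,
      nhdsWithin_le_nhds (hg.continuousAt.eventually_ne hg0),
      nhdsWithin_le_nhds hg.eventually_analyticAt] with z hz (hne : z ≠ z₀) hgz hgz'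
    have hsub : z - z₀ ≠ 0 := sub_ne_zero.mpr hne
    simp only [smul_eq_mul] at hz
    rw [hz, logDeriv_mul (f := fun z => (z - z₀) ^ m) (g := g) z (pow_ne_zero m hsub) hgz
      (by fun_prop) hgz'.differentiableAt, logDeriv_fun_pow (f := (· - z₀)) (by fun_prop),
      logDeriv_apply, logDeriv_apply]
    simp only [deriv_sub_const, deriv_id'']
    field_simp
  refine Tendsto.congr' hlog (tendsto_nhdsWithin_of_tendsto_nhds ?_)
  have hcont : ContinuousAt (fun z => m + (z - z₀) * (deriv g z / g z)) z₀ := by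
    have := hg.continuousAt
    have := hg.deriv.continuousAt
    fun_prop (disch := exact hg0)
  simpa using hcont.tendsto

theorem three_four_one_cpow_re_nonneg {x : ℝ} (hx : 0 < x) {s : ℂ} (hs : s.re = 1) (ε : ℝ) :
    0 ≤ (3 * (x : ℂ) ^ (-(1 + ε : ℂ)) + 4 * (x : ℂ) ^ (-(s + ε)) +
      (x : ℂ) ^ (-(2 * s - 1 + ε))).re := by
  have hx0 : (x : ℂ) ≠ 0 := Complex.ofReal_ne_zero.mpr hx.ne'
  set z := (x : ℂ) ^ (1 - s) with hz
  have hz1 : ‖z‖ = 1 := by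
    rw [hz, Complex.norm_cpow_eq_rpow_re_of_pos hx, Complex.sub_re, hs]
    simp
  have hzsq : z.re ^ 2 + z.im ^ 2 = 1 := by
    rw [← Complex.normSq_add_mul_I, Complex.re_add_im, Complex.normSq_eq_norm_sq, hz1, one_pow]
  rw [show -(s + ε) = -((1 + ε : ℝ) : ℂ) + (1 - s) by push_cast; ring,
    show -(2 * s - 1 + ε) = -((1 + ε : ℝ) : ℂ) + ((1 - s) + (1 - s)) by push_cast; ring,
    show -(1 + ε : ℂ) = -((1 + ε : ℝ) : ℂ) by push_cast; ring,
    Complex.cpow_add _ _ hx0, Complex.cpow_add _ _ hx0, Complex.cpow_add _ _ hx0, ← hz,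
    ← Complex.ofReal_neg, ← Complex.ofReal_cpow hx.le,
    show ∀ y : ℂ, 3 * y + 4 * (y * z) + y * (z * z) = y * (3 + 4 * z + z * z) by intro y; ring,
    Complex.re_ofReal_mul]
  refine mul_nonneg (by positivity) ?_
  simp only [Complex.add_re, Complex.mul_re, Complex.re_ofNat, Complex.im_ofNat]
  linarith [sq_nonneg (z.re + 1)]

theorem three_four_one_re_nonneg_of_hasSum {ι : Type*} {a n : ι → ℝ} (ha : ∀ i, 0 ≤ a i)
    (hn : ∀ i, 0 < n i) {L : ℂ → ℂ}
    (hL : ∀ s : ℂ, 1 < s.re → HasSum (fun i => a i * (n i : ℂ) ^ (-s)) (L s))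
    {s : ℂ} (hs : s.re = 1) {ε : ℝ} (hε : 0 < ε) :
    0 ≤ (3 * L (1 + ε) + 4 * L (s + ε) + L (2 * s - 1 + ε)).re := by
  have hterm (z : ℂ) (hz : z.re = 1) := hL (z + ε) (by simpa [hz] using hε)
  refine (Complex.hasSum_re ((((hterm 1 Complex.one_re).mul_left 3).add
    ((hterm s hs).mul_left 4)).add (hterm _ (by norm_num [hs])))).nonneg fun i => ?_
  have := mul_nonneg (ha i) (three_four_one_cpow_re_nonneg (hn i) hs ε)
  rw [← Complex.re_ofReal_mul] at this
  convert this using 2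
  ring

theorem tendsto_mul_inv_sub_one_sub_logDeriv_sub {H R : ℂ → ℂ} {s : ℂ} (hH : AnalyticAt ℂ H s)
    (htop : analyticOrderAt H s ≠ ⊤) (hR : ContinuousOn R {s | 1 ≤ s.re}) (hs : s.re = 1) :
    Tendsto (fun ε : ℝ => ε * (1 / (s + ε - 1) - logDeriv H (s + ε) - R (s + ε))) (𝓝[>] 0)
      (𝓝 ((if s = 1 then 1 else 0) - analyticOrderNatAt H s)) := by
  have hε : Tendsto (fun ε : ℝ => (ε : ℂ)) (𝓝[>] 0) (𝓝 0) :=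
    (Complex.continuous_ofReal.tendsto' 0 0 rfl).mono_left nhdsWithin_le_nhds
  have hsε : Tendsto (fun ε : ℝ => s + ε) (𝓝[>] 0) (𝓝 s) := by simpa using hε.const_add s
  have hpole : Tendsto (fun ε : ℝ => (ε : ℂ) * (1 / (s + ε - 1))) (𝓝[>] 0)
      (𝓝 (if s = 1 then 1 else 0)) := by
    split_ifs with h1
    · refine tendsto_const_nhds.congr' ?_
      filter_upwards [self_mem_nhdsWithin] with ε (hε : 0 < ε)
      rw [h1, add_sub_cancel_left, mul_one_div_cancel (Complex.ofReal_ne_zero.mpr hε.ne')]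
    · simpa using hε.mul ((hsε.sub_const 1).inv₀ (sub_ne_zero.mpr h1))
  have hlog : Tendsto (fun ε : ℝ => (ε : ℂ) * logDeriv H (s + ε)) (𝓝[>] 0)
      (𝓝 (analyticOrderNatAt H s)) := by
    refine ((tendsto_sub_mul_logDeriv hH htop).comp
      (tendsto_nhdsWithin_iff.mpr ⟨hsε, ?_⟩)).congr fun ε => by simp
    filter_upwards [self_mem_nhdsWithin] with ε (hε : 0 < ε)
    simpa using hε.ne'
  have hRlim : Tendsto (fun ε : ℝ => (ε : ℂ) * R (s + ε)) (𝓝[>] 0) (𝓝 0) := by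
    have : Tendsto (fun ε : ℝ => R (s + ε)) (𝓝[>] 0) (𝓝 (R s)) := by
      refine (hR s hs.ge).tendsto.comp (tendsto_nhdsWithin_iff.mpr ⟨hsε, ?_⟩)
      filter_upwards [self_mem_nhdsWithin] with ε (hε : 0 < ε)
      simpa [hs] using hε.le
    simpa using hε.mul this
  simpa [mul_sub] using (hpole.sub hlog).sub hRlim

theorem ne_zero_of_hasSum_cpow {ι : Type*} {a n : ι → ℝ} (ha : ∀ i, 0 ≤ a i) (hn : ∀ i, 0 < n i)
    {H R : ℂ → ℂ} (hH : AnalyticOnNhd ℂ H {s | 1 ≤ s.re}) (hH1 : H 1 ≠ 0)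
    (hR : ContinuousOn R {s | 1 ≤ s.re})
    (hsum : ∀ s : ℂ, 1 < s.re →
      HasSum (fun i => a i * (n i : ℂ) ^ (-s)) (1 / (s - 1) - logDeriv H s - R s))
    {s : ℂ} (hs : s.re = 1) : H s ≠ 0 := fun hHs => by
  have h1 : (1 : ℂ) ∈ {s : ℂ | 1 ≤ s.re} := by simp
  have hs1 : s ≠ 1 := by rintro rfl; exact hH1 hHs
  have hs2 : 2 * s - 1 ≠ 1 := fun h => hs1 (by linear_combination h / 2)
  have hs2re : (2 * s - 1).re = 1 := by norm_num [hs]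
  have htop {z : ℂ} (hz : z.re = 1) : analyticOrderAt H z ≠ ⊤ :=
    hH.analyticOrderAt_ne_top_of_isPreconnected (convex_halfSpace_re_ge 1).isPreconnected h1
      hz.ge (by simp [(hH 1 h1).analyticOrderAt_eq_zero.mpr hH1])
  have hlim {z : ℂ} (hz : z.re = 1) :=
    tendsto_mul_inv_sub_one_sub_logDeriv_sub (hH z hz.ge) (htop hz) hR hz
  have hcomb := (((hlim Complex.one_re).const_mul 3).add ((hlim hs).const_mul 4)).add
    (hlim hs2re)
  have hnonneg := ge_of_tendsto ((Complex.continuous_re.tendsto _).comp hcomb) (b := 0) <| by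
    filter_upwards [self_mem_nhdsWithin] with ε (hε : 0 < ε)
    convert mul_nonneg hε.le (three_four_one_re_nonneg_of_hasSum ha hn hsum hs hε) using 1
    rw [← Complex.re_ofReal_mul, Function.comp_apply]
    congr 1
    ring
  have hm : analyticOrderNatAt H s ≠ 0 := fun h =>
    (hH s hs.ge).analyticOrderAt_ne_zero.mpr hHs <| by
      rw [← Nat.cast_analyticOrderNatAt (htop hs), h, Nat.cast_zero]
  have hm1 : analyticOrderNatAt H 1 = 0 := by
    rw [analyticOrderNatAt, (hH 1 h1).analyticOrderAt_eq_zero.mpr hH1, ENat.toNat_zero]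
  have horders : (0 : ℝ) ≤
      3 - 4 * analyticOrderNatAt H s - analyticOrderNatAt H (2 * s - 1) := by
    rw [if_pos rfl, if_neg hs1, if_neg hs2, hm1] at hnonneg
    exact hnonneg.trans_eq (by simp [sub_eq_add_neg])
  have : (1 : ℝ) ≤ analyticOrderNatAt H s := Nat.one_le_cast.mpr (Nat.one_le_iff_ne_zero.mpr hm)
  linarith [Nat.cast_nonneg (α := ℝ) (analyticOrderNatAt H (2 * s - 1))]

end Nonvanishing

section ChebyshevFunction

open Module NumberField

variable (K : Type*) [Field K] [NumberField K]

theorem exists_continuousOn_hasSum_inv_sub_one_add :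
    ∃ E : ℂ → ℂ, ContinuousOn E {s | 1 ≤ s.re} ∧ ∀ s : ℂ, 1 < s.re →
      HasSum (fun P : HeightOneSpectrum (𝓞 K) =>
        Real.log (Ideal.absNorm P.asIdeal) * (Ideal.absNorm P.asIdeal : ℂ) ^ (-s))
        (1 / (s - 1) + E s) := by
  obtain ⟨R, hR, hsum⟩ := exists_continuousOn_hasSum_log_absNorm_mul_cpow K
  obtain ⟨α, hα, H, hH, hH1, hHζ⟩ := exists_differentiableOn_eq_sub_one_mul_dedekindZeta K
  have hopen (σ : ℝ) : IsOpen {s : ℂ | σ < s.re} := isOpen_lt continuous_const Complex.continuous_re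
  have hHan : AnalyticOnNhd ℂ H {s | 1 ≤ s.re} :=
    (hH.analyticOnNhd (hopen α)).mono fun s hs => hα.trans_le hs
  have hlog (s : ℂ) (hs : 1 < s.re) :
      -logDeriv (dedekindZeta K) s - R s = 1 / (s - 1) - logDeriv H s - R s := by
    have hs1 : s - 1 ≠ 0 := fun h => by simp [sub_eq_zero.mp h] at hs
    have hHeq : H =ᶠ[𝓝 s] fun s => (s - 1) * dedekindZeta K s := by
      filter_upwards [(hopen 1).mem_nhds hs] using hHζ
    rw [(logDeriv_congr_nhds hHeq).eq_of_nhds, logDeriv_mul (f := (· - 1)) s hs1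
      (hasProd_one_sub_absNorm_cpow hs).1 (by fun_prop) (differentiableAt_dedekindZeta hs),
      show logDeriv (· - 1) s = 1 / (s - 1) by simp [logDeriv_apply]]
    ring
  have hH0 (s : ℂ) (hs : 1 ≤ s.re) : H s ≠ 0 := by
    rcases hs.lt_or_eq with hs | hs
    · rw [hHζ s hs]
      refine mul_ne_zero (fun h => ?_) (hasProd_one_sub_absNorm_cpow hs).1
      simp [sub_eq_zero.mp h] at hs
    · refine ne_zero_of_hasSum_cpow (a := fun P : HeightOneSpectrum (𝓞 K) =>
        Real.log (Ideal.absNorm P.asIdeal)) (n := fun P => (Ideal.absNorm P.asIdeal : ℝ))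
        (fun P => Real.log_natCast_nonneg _)
        (fun P => Nat.cast_pos.mpr (zero_lt_two.trans_le (two_le_absNorm P))) hHan hH1 hR
        (fun s hs => ?_) hs.symm
      rw [← hlog s hs]
      exact hsum s hs
  refine ⟨fun s => -logDeriv H s - R s, ?_, fun s hs => ?_⟩
  · exact (hHan.deriv.continuousOn.div hHan.continuousOn hH0).neg.sub hR
  · rw [← add_sub_assoc, ← sub_eq_add_neg, ← hlog s hs]
    exact hsum s hs

theorem finite_setOf_absNorm_le (x : ℝ) :
    {P : HeightOneSpectrum (𝓞 K) | (Ideal.absNorm P.asIdeal : ℝ) ≤ x}.Finite :=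
  ((Ideal.finite_setOfPred_absNorm_le (S := 𝓞 K) ⌊x⌋₊).preimage
    fun _ _ _ _ h => HeightOneSpectrum.ext h).subset fun _ hP => Nat.le_floor hP

/-- The finite set of nonzero prime ideals of `𝓞 K` of absolute norm at most `x`. -/
noncomputable def primesNormLE (x : ℝ) : Finset (HeightOneSpectrum (𝓞 K)) :=
  (finite_setOf_absNorm_le K x).toFinset

variable {K} in
theorem mem_primesNormLE {x : ℝ} {P : HeightOneSpectrum (𝓞 K)} :
    P ∈ primesNormLE K x ↔ (Ideal.absNorm P.asIdeal : ℝ) ≤ x :=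
  (finite_setOf_absNorm_le K x).mem_toFinset

variable {K} in
theorem finsum_mem_absNorm_le {E : Type*} [AddCommMonoid E] (f : HeightOneSpectrum (𝓞 K) → E)
    (x : ℝ) :
    ∑ᶠ P ∈ {P : HeightOneSpectrum (𝓞 K) | (Ideal.absNorm P.asIdeal : ℝ) ≤ x}, f P =
      ∑ P ∈ primesNormLE K x, f P :=
  finsum_mem_eq_finite_toFinset_sum f (finite_setOf_absNorm_le K x)

variable {K} in
theorem ncard_setOf_absNorm_le (x : ℝ) :
    {P : HeightOneSpectrum (𝓞 K) | (Ideal.absNorm P.asIdeal : ℝ) ≤ x}.ncard =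
      (primesNormLE K x).card :=
  ncard_eq_toFinset_card _ (finite_setOf_absNorm_le K x)

theorem primesNormLE_mono : Monotone (primesNormLE K) := fun _ _ hxy _ hP =>
  mem_primesNormLE.mpr ((mem_primesNormLE.mp hP).trans hxy)

/-- The Chebyshev function `∑ log N(P)` of `K`, over the nonzero prime ideals `P` with
`N(P) ≤ x`. -/
noncomputable def primeIdealTheta (x : ℝ) : ℝ :=
  ∑ P ∈ primesNormLE K x, Real.log (Ideal.absNorm P.asIdeal)

theorem primeIdealTheta_mono : Monotone (primeIdealTheta K) := fun _ _ hxy =>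
  Finset.sum_le_sum_of_subset_of_nonneg (primesNormLE_mono K hxy) fun _ _ _ =>
    Real.log_natCast_nonneg _

variable {K}

theorem primeIdealTheta_eq_zero {x : ℝ} (hx : x < 1) : primeIdealTheta K x = 0 :=
  Finset.sum_eq_zero fun P hP => by
    have h1 := mem_primesNormLE.mp hP
    have h2 : (2 : ℝ) ≤ Ideal.absNorm P.asIdeal := Nat.ofNat_le_cast.mpr (two_le_absNorm P)
    linarith

end ChebyshevFunction

section RationalPrimes

open Module NumberField

theorem card_primesOver_le_finrank {R : Type*} (S : Type*) [CommRing R] [IsDomain R] [CommRing S]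
    [Algebra R S] [Module.Finite R S] [Module.Flat R S] (p : Ideal R) [p.IsPrime] :
    Nat.card (p.primesOver S) ≤ finrank R S := by
  have := (Algebra.QuasiFinite.finite_primesOver (S := S) p).fintype
  rw [← Ideal.sum_ramification_inertia_eq_finrank p S, Nat.card_eq_fintype_card,
    Fintype.card_eq_sum_ones]
  exact Finset.sum_le_sum fun q _ => have := q.2.1
    Nat.mul_pos (q.1.ramificationIdx_pos R) (q.1.inertiaDeg_pos R)

variable {K : Type*} [Field K]

/-- The positive generator of the prime of `ℤ` below `P`, that is, the residue characteristic. -/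
noncomputable def residueChar (P : HeightOneSpectrum (𝓞 K)) : ℕ :=
  Ideal.absNorm (P.asIdeal.under ℤ)

theorem prime_residueChar (P : HeightOneSpectrum (𝓞 K)) : (residueChar P).Prime :=
  have := P.isPrime
  have : NeZero P.asIdeal := ⟨P.ne_bot⟩
  Nat.absNorm_under_prime P.asIdeal

variable [NumberField K]

theorem residueChar_le_absNorm (P : HeightOneSpectrum (𝓞 K)) :
    residueChar P ≤ Ideal.absNorm P.asIdeal :=
  Nat.le_of_dvd (zero_lt_two.trans_le (two_le_absNorm P)) (Int.absNorm_under_dvd_absNorm P.asIdeal)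

theorem absNorm_le_residueChar_pow (P : HeightOneSpectrum (𝓞 K)) :
    Ideal.absNorm P.asIdeal ≤ residueChar P ^ finrank ℚ K := by
  have hmem : Ideal.span {(residueChar P : 𝓞 K)} ≤ P.asIdeal :=
    (Ideal.span_singleton_le_iff_mem _).mpr (Int.absNorm_under_mem P.asIdeal)
  have hnorm : Ideal.absNorm (Ideal.span {(residueChar P : 𝓞 K)}) =
      residueChar P ^ finrank ℚ K := by
    rw [← RingOfIntegers.rank K, Ideal.absNorm_span_singleton, ← map_natCast (algebraMap ℤ (𝓞 K)),
      Algebra.norm_algebraMap]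
    simp
  rw [← hnorm]
  refine Nat.le_of_dvd ?_ (Ideal.absNorm_dvd_absNorm_of_le hmem)
  rw [hnorm]
  exact pow_pos (prime_residueChar P).pos _

theorem card_filter_residueChar_eq_le (S : Finset (HeightOneSpectrum (𝓞 K))) {p : ℕ}
    (hp : p.Prime) : (S.filter (residueChar · = p)).card ≤ finrank ℚ K := by
  have : Fact p.Prime := ⟨hp⟩
  have := (Int.ideal_span_isMaximal_of_prime p).isPrime
  have hover (P : HeightOneSpectrum (𝓞 K)) (hP : P ∈ S.filter (residueChar · = p)) :
      P.asIdeal ∈ (Ideal.span {(p : ℤ)}).primesOver (𝓞 K) := by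
    refine ⟨P.isPrime, ⟨?_⟩⟩
    rw [← (Finset.mem_filter.mp hP).2]
    exact Int.ideal_span_absNorm_eq_self _
  have hcard := Nat.card_le_card_of_injective
    (fun P : S.filter (residueChar · = p) =>
      (⟨P.1.asIdeal, hover P P.2⟩ : (Ideal.span {(p : ℤ)}).primesOver (𝓞 K)))
    fun P Q h => Subtype.ext (HeightOneSpectrum.ext (congrArg Subtype.val h))
  rw [Nat.card_eq_fintype_card, Fintype.card_coe] at hcard
  exact (hcard.trans (card_primesOver_le_finrank _ _)).trans_eq (RingOfIntegers.rank K)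

theorem sum_residueChar_le {f : ℕ → ℝ} {x : ℝ} (hf : ∀ p ∈ Nat.primesLE ⌊x⌋₊, 0 ≤ f p) :
    ∑ P ∈ primesNormLE K x, f (residueChar P) ≤
      finrank ℚ K * ∑ p ∈ Nat.primesLE ⌊x⌋₊, f p := by
  have hmaps : ∀ P ∈ primesNormLE K x, residueChar P ∈ Nat.primesLE ⌊x⌋₊ := fun P hP =>
    Nat.mem_primesLE.mpr ⟨(residueChar_le_absNorm P).trans
      (Nat.le_floor (mem_primesNormLE.mp hP)), prime_residueChar P⟩
  rw [← Finset.sum_fiberwise_of_maps_to' hmaps, Finset.mul_sum]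
  refine Finset.sum_le_sum fun p hp => ?_
  rw [Finset.sum_const, nsmul_eq_mul]
  exact mul_le_mul_of_nonneg_right (Nat.cast_le.mpr
    (card_filter_residueChar_eq_le _ (Nat.prime_of_mem_primesLE hp))) (hf p hp)

theorem primeIdealTheta_le {x : ℝ} (hx : 0 ≤ x) :
    primeIdealTheta K x ≤ (finrank ℚ K : ℝ) ^ 2 * Real.log 4 * x := by
  have hlog (P : HeightOneSpectrum (𝓞 K)) :
      Real.log (Ideal.absNorm P.asIdeal) ≤ finrank ℚ K * Real.log (residueChar P) := by
    rw [← Real.log_pow, ← Nat.cast_pow]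
    exact Real.log_le_log (Nat.cast_pos.mpr (zero_lt_two.trans_le (two_le_absNorm P)))
      (Nat.cast_le.mpr (absNorm_le_residueChar_pow P))
  calc primeIdealTheta K x
      ≤ finrank ℚ K * ∑ P ∈ primesNormLE K x, Real.log (residueChar P) := by
        rw [Finset.mul_sum]
        exact Finset.sum_le_sum fun P _ => hlog P
    _ ≤ finrank ℚ K * (finrank ℚ K * Chebyshev.theta x) := by
        rw [Chebyshev.theta_eq_sum_primesLE]
        gcongr
        exact sum_residueChar_le (f := fun p => Real.log p) fun p _ => Real.log_natCast_nonneg p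
    _ ≤ finrank ℚ K * (finrank ℚ K * (Real.log 4 * x)) := by
        gcongr
        exact Chebyshev.theta_le_log4_mul_x hx
    _ = (finrank ℚ K : ℝ) ^ 2 * Real.log 4 * x := by ring

theorem log_div_absNorm_nonneg {x : ℝ} {P : HeightOneSpectrum (𝓞 K)} (hP : P ∈ primesNormLE K x) :
    0 ≤ Real.log (x / Ideal.absNorm P.asIdeal) :=
  Real.log_nonneg ((one_le_div (Nat.cast_pos.mpr (zero_lt_two.trans_le (two_le_absNorm P)))).mpr
    (mem_primesNormLE.mp hP))

theorem sum_log_div_absNorm_le {x : ℝ} (hx : 0 < x) :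
    ∑ P ∈ primesNormLE K x, Real.log (x / Ideal.absNorm P.asIdeal) ≤
      finrank ℚ K * (Nat.primeCounting ⌊x⌋₊ * Real.log x - Chebyshev.theta x) := by
  calc ∑ P ∈ primesNormLE K x, Real.log (x / Ideal.absNorm P.asIdeal)
      ≤ ∑ P ∈ primesNormLE K x, Real.log (x / residueChar P) := by
        have hpos (P : HeightOneSpectrum (𝓞 K)) : (0 : ℝ) < residueChar P :=
          Nat.cast_pos.mpr (prime_residueChar P).pos
        have hle (P : HeightOneSpectrum (𝓞 K)) : (residueChar P : ℝ) ≤ Ideal.absNorm P.asIdeal :=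
          Nat.cast_le.mpr (residueChar_le_absNorm P)
        exact Finset.sum_le_sum fun P _ => Real.log_le_log
          (div_pos hx ((hpos P).trans_le (hle P)))
          (div_le_div_of_nonneg_left hx.le (hpos P) (hle P))
    _ ≤ finrank ℚ K * ∑ p ∈ Nat.primesLE ⌊x⌋₊, Real.log (x / p) := by
        refine sum_residueChar_le (f := fun p => Real.log (x / p)) fun p hp => Real.log_nonneg ?_
        rw [one_le_div (Nat.cast_pos.mpr (Nat.prime_of_mem_primesLE hp).pos)]
        exact (Nat.le_floor_iff hx.le).mp (Nat.le_of_mem_primesLE hp)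
    _ = finrank ℚ K * (Nat.primeCounting ⌊x⌋₊ * Real.log x - Chebyshev.theta x) := by
        rw [Chebyshev.theta_eq_sum_primesLE, ← Nat.primesLE_card_eq_primeCounting,
          ← nsmul_eq_mul (Finset.card _), ← Finset.sum_const, ← Finset.sum_sub_distrib]
        refine congrArg _ (Finset.sum_congr rfl fun p hp => Real.log_div hx.ne' ?_)
        exact Nat.cast_ne_zero.mpr (Nat.prime_of_mem_primesLE hp).ne_zero

theorem tendsto_primeCounting_mul_log_sub_theta_div :
    Tendsto (fun x : ℝ => (Nat.primeCounting ⌊x⌋₊ * Real.log x - Chebyshev.theta x) / x)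
      atTop (𝓝 0) := by
  obtain ⟨C, hC⟩ := Chebyshev.primeCounting_sub_theta_div_log_isBigO.bound
  have hlim : Tendsto (fun x : ℝ => C * (Real.log x)⁻¹) atTop (𝓝 0) := by
    simpa using Real.tendsto_log_atTop.inv_tendsto_atTop.const_mul C
  refine squeeze_zero_norm' ?_ hlim
  filter_upwards [hC, eventually_gt_atTop 1] with x hx hx1
  have hlog : 0 < Real.log x := Real.log_pos hx1
  have hx0 : 0 < x := zero_lt_one.trans hx1
  rw [Real.norm_of_nonneg (by positivity : 0 ≤ x / Real.log x ^ 2)] at hx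
  calc ‖(Nat.primeCounting ⌊x⌋₊ * Real.log x - Chebyshev.theta x) / x‖
      = ‖(Nat.primeCounting ⌊x⌋₊ - Chebyshev.theta x / Real.log x : ℝ)‖ * (Real.log x / x) := by
        rw [← Real.norm_of_nonneg (by positivity : 0 ≤ Real.log x / x), ← norm_mul]
        congr 1
        field_simp
    _ ≤ C * (x / Real.log x ^ 2) * (Real.log x / x) := by gcongr
    _ = C * (Real.log x)⁻¹ := by field_simp

variable (K) in
theorem tendsto_sum_log_div_absNorm_div :
    Tendsto (fun x : ℝ => (∑ P ∈ primesNormLE K x, Real.log (x / Ideal.absNorm P.asIdeal)) / x)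
      atTop (𝓝 0) := by
  have h := tendsto_primeCounting_mul_log_sub_theta_div.const_mul (finrank ℚ K : ℝ)
  rw [mul_zero] at h
  refine squeeze_zero' ?_ ?_ h <;> filter_upwards [eventually_gt_atTop 0] with x hx
  · exact div_nonneg (Finset.sum_nonneg fun P => log_div_absNorm_nonneg) hx.le
  · rw [← mul_div_assoc]
    exact div_le_div_of_nonneg_right (sum_log_div_absNorm_le hx) hx.le

end RationalPrimes

section PrimeIdealTheorem

open Module NumberField

variable (K : Type*) [Field K] [NumberField K]

theorem hasMellin_primeIdealTheta_inv {s m : ℂ} (hs : 1 < s.re)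
    (hm : HasSum (fun P : HeightOneSpectrum (𝓞 K) =>
      Real.log (Ideal.absNorm P.asIdeal) * (Ideal.absNorm P.asIdeal : ℂ) ^ (-s)) m) :
    HasMellin (fun t => (primeIdealTheta K t⁻¹ : ℂ)) s (m * (1 / s)) := by
  have : Countable (HeightOneSpectrum (𝓞 K)) :=
    Function.Injective.countable fun P Q => HeightOneSpectrum.ext
  let w : ℝ → ℂ := (Ioc 0 1).indicator fun _ => 1
  have hw : HasMellin w s (1 / s) := hasMellin_one_Ioc (zero_lt_one.trans hs)
  have hpos (P : HeightOneSpectrum (𝓞 K)) : (0 : ℝ) < Ideal.absNorm P.asIdeal :=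
    Nat.cast_pos.mpr (zero_lt_two.trans_le (two_le_absNorm P))
  have hθ (t : ℝ) (ht : 0 < t) : HasSum (fun P : HeightOneSpectrum (𝓞 K) =>
      (Real.log (Ideal.absNorm P.asIdeal) : ℂ) * w (Ideal.absNorm P.asIdeal * t))
      (primeIdealTheta K t⁻¹) := by
    have hmem (P : HeightOneSpectrum (𝓞 K)) :
        (Ideal.absNorm P.asIdeal * t : ℝ) ∈ Ioc (0 : ℝ) 1 ↔ P ∈ primesNormLE K t⁻¹ := by
      rw [mem_primesNormLE, ← one_div, le_div_iff₀ ht]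
      exact and_iff_right (mul_pos (hpos P) ht)
    rw [primeIdealTheta, Complex.ofReal_sum]
    rw [← Finset.sum_congr rfl fun P hP => ?_]
    · refine hasSum_sum_of_ne_finset_zero fun P hP => ?_
      simp only [w, indicator_of_notMem ((hmem P).not.mpr hP), mul_zero]
    · simp only [w, indicator_of_mem ((hmem P).mpr hP), mul_one]
  have h := hasMellin_tsum_comp_mul
    (a := fun P : HeightOneSpectrum (𝓞 K) => (Real.log (Ideal.absNorm P.asIdeal) : ℂ))
    hpos hw.1 hm.summable fun t ht => (hθ t ht).summable
  rw [hw.2] at h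
  exact hasMellin_congr (fun t ht => (hθ t ht).tsum_eq) (hm.tsum_eq ▸ h)

theorem tendsto_primeIdealTheta_div :
    Tendsto (fun x => primeIdealTheta K x / x) atTop (𝓝 1) := by
  obtain ⟨E, hE, hsum⟩ := exists_continuousOn_hasSum_inv_sub_one_add K
  have hne {s : ℂ} (hs : 1 ≤ s.re) : s ≠ 0 := by
    rintro rfl
    norm_num at hs
  refine wiener_ikehara (G := fun s => (E s - 1) / s) (primeIdealTheta_mono K)
    (fun x => primeIdealTheta_eq_zero) (fun x => primeIdealTheta_le)
    ((hE.sub continuousOn_const).div continuousOn_id fun s => hne) fun s hs => ?_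
  convert hasMellin_primeIdealTheta_inv K hs (hsum s hs) using 1
  have hs1 : s - 1 ≠ 0 := fun h => by simp [sub_eq_zero.mp h] at hs
  have hs0 := hne hs.le
  push_cast
  field_simp
  ring

end PrimeIdealTheorem

section Averages

open NumberField

variable {K : Type*} [Field K] [NumberField K] {E : Type*} [NormedAddCommGroup E]
  [NormedSpace ℝ E] {s : HeightOneSpectrum (𝓞 K) → E} {M : ℝ} {L : E}

theorem log_smul_sum_primesNormLE {x : ℝ} (hx : x ≠ 0) :
    Real.log x • ∑ P ∈ primesNormLE K x, s P =
      ∑ P ∈ primesNormLE K x, Real.log (x / Ideal.absNorm P.asIdeal) • s P +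
        ∑ P ∈ primesNormLE K x, Real.log (Ideal.absNorm P.asIdeal) • s P := by
  rw [← Finset.sum_add_distrib, Finset.smul_sum]
  refine Finset.sum_congr rfl fun P _ => ?_
  rw [← add_smul, Real.log_div hx
    (Nat.cast_ne_zero.mpr (zero_lt_two.trans_le (two_le_absNorm P)).ne'), sub_add_cancel]

theorem tendsto_inv_smul_sum_log_div_absNorm_smul (hs : ∀ P, ‖s P‖ ≤ M) :
    Tendsto (fun x : ℝ => x⁻¹ • ∑ P ∈ primesNormLE K x,
      Real.log (x / Ideal.absNorm P.asIdeal) • s P) atTop (𝓝 0) := by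
  have hlim := (tendsto_sum_log_div_absNorm_div K).mul_const M
  rw [zero_mul] at hlim
  refine squeeze_zero_norm' ?_ hlim
  filter_upwards [eventually_gt_atTop 0] with x hx
  rw [norm_smul, norm_inv, Real.norm_of_nonneg hx.le, div_mul_eq_mul_div, inv_mul_eq_div,
    Finset.sum_mul]
  gcongr
  refine norm_sum_le_of_le _ fun P hP => ?_
  rw [norm_smul, Real.norm_of_nonneg (log_div_absNorm_nonneg hP)]
  exact mul_le_mul_of_nonneg_left (hs P) (log_div_absNorm_nonneg hP)

theorem tendsto_log_div_smul_sum (hs : ∀ P, ‖s P‖ ≤ M)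
    (hL : Tendsto (fun x : ℝ => x⁻¹ • ∑ P ∈ primesNormLE K x,
      Real.log (Ideal.absNorm P.asIdeal) • s P) atTop (𝓝 L)) :
    Tendsto (fun x : ℝ => (Real.log x / x) • ∑ P ∈ primesNormLE K x, s P) atTop (𝓝 L) := by
  have h := (tendsto_inv_smul_sum_log_div_absNorm_smul hs).add hL
  rw [zero_add] at h
  refine h.congr' ?_
  filter_upwards [eventually_ne_atTop 0] with x hx
  rw [← smul_add, ← log_smul_sum_primesNormLE hx, smul_smul, div_eq_inv_mul]

variable (K) in
theorem tendsto_card_primesNormLE_mul_log_div :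
    Tendsto (fun x : ℝ => Real.log x / x * (primesNormLE K x).card) atTop (𝓝 1) := by
  have h := tendsto_log_div_smul_sum (K := K) (s := fun _ => (1 : ℝ)) (fun _ => norm_one.le)
    (L := 1) ((tendsto_primeIdealTheta_div K).congr fun x => by
      simp [primeIdealTheta, div_eq_inv_mul])
  simpa using h

theorem nagao_lemma_backward_general (hs : ∀ P, ‖s P‖ ≤ M)
    (hL : Tendsto (fun x : ℝ => x⁻¹ • ∑ P ∈ primesNormLE K x,
      Real.log (Ideal.absNorm P.asIdeal) • s P) atTop (𝓝 L)) :
    Tendsto (fun x : ℝ => ((primesNormLE K x).card : ℝ)⁻¹ • ∑ P ∈ primesNormLE K x, s P)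
      atTop (𝓝 L) := by
  have h := ((tendsto_card_primesNormLE_mul_log_div K).inv₀ one_ne_zero).smul
    (tendsto_log_div_smul_sum hs hL)
  rw [inv_one, one_smul] at h
  refine h.congr' ?_
  filter_upwards [eventually_gt_atTop 1] with x hx
  have : Real.log x / x ≠ 0 := (div_pos (Real.log_pos hx) (zero_lt_one.trans hx)).ne'
  rw [smul_smul, mul_inv_rev, inv_mul_cancel_right₀ this]

end Averages

/-- **Statement 0.** Let `k` be a number field and `s` a family of nonnegative real
numbers indexed by the nonzero prime ideals of the ring of integers of `k`, bounded
above by `M`.  If `C_N / N` converges to `L` as `N → ∞`, then `D_N / π_k(N)` also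
converges to `L`, where
`C_N = Σ_{𝔭 : N(𝔭) ≤ N} s_𝔭 log N(𝔭)`, `D_N = Σ_{𝔭 : N(𝔭) ≤ N} s_𝔭` and
`π_k(N) = #{𝔭 : N(𝔭) ≤ N}`. -/
theorem nagao_lemma_backward
    (k : Type*) [Field k] [NumberField k]
    (s : HeightOneSpectrum (NumberField.RingOfIntegers k) → ℝ)
    (M : ℝ)
    (hs_nonneg : ∀ p, 0 ≤ s p)
    (hs_bdd : ∀ p, s p ≤ M)
    (L : ℝ)
    (hC : Tendsto
      (fun N : ℝ =>
        (∑ᶠ p ∈ {p : HeightOneSpectrum (NumberField.RingOfIntegers k) |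
            (Ideal.absNorm p.asIdeal : ℝ) ≤ N},
          s p * Real.log (Ideal.absNorm p.asIdeal)) / N)
      atTop (nhds L)) :
    Tendsto
      (fun N : ℝ =>
        (∑ᶠ p ∈ {p : HeightOneSpectrum (NumberField.RingOfIntegers k) |
            (Ideal.absNorm p.asIdeal : ℝ) ≤ N}, s p) /
        (({p : HeightOneSpectrum (NumberField.RingOfIntegers k) |
            (Ideal.absNorm p.asIdeal : ℝ) ≤ N}).ncard : ℝ))
      atTop (nhds L) := by
  simp only [finsum_mem_absNorm_le, ncard_setOf_absNorm_le] at hC ⊢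
  simpa only [smul_eq_mul, div_eq_inv_mul, mul_comm] using nagao_lemma_backward_general
    (fun p => (Real.norm_of_nonneg (hs_nonneg p)).trans_le (hs_bdd p)) (hC.congr fun N => by
      simp only [smul_eq_mul, div_eq_inv_mul, mul_comm])
end

section
/- Let p be an odd prime and let a, b ∈ F_p. For t ∈ F_p write f(t) = t³ + a·t + b. Then Σ_{t ∈ F_p} ( p − #{(x,y) ∈ F_p × F_p : y² = x³ + f(t)²·a·x + f(t)³·b} ) = −( p − #{(x,y) ∈ F_p × F_p : y² = x³ + a·x + b} )². -/
/-!
Put `c = f(t)` and let `χ` be the quadratic character. Substituting `x ↦ c x` in the twisted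
equation multiplies its right-hand side by `c³`, and `χ(c³) = χ(c)`, so the defect of the twisted
fibre is `χ(f(t))` times the defect `D` of `y² = f(x)`; for `c = 0` both vanish, because
`∑ χ(x³) = ∑ χ(x) = 0`. The same character sum computes `D = -∑ₜ χ(f(t))`, so summing over `t`
gives `-D²`. Only the odd degree of `f` matters. In characteristic two squaring is a bijection and
every defect vanishes.
-/

open Polynomial

/-- The number by which the affine curve `y² = g(x)` over `R` falls short of having `#R` points.
For a separable cubic `g` over a finite field of odd characteristic it is the trace of Frobenius,
the point at infinity accounting for the `1` in `#E = #R + 1 - trace`. -/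
noncomputable def pointDefect {R : Type*} [Monoid R] (g : R → R) : ℤ :=
  Nat.card R - Nat.card {xy : R × R // xy.2 ^ 2 = g xy.1}

theorem pointDefect_eq_sum {R : Type*} [Monoid R] [Fintype R] (g : R → R) :
    pointDefect g = ∑ x, (1 - (Nat.card {y : R // y ^ 2 = g x} : ℤ)) := by
  rw [pointDefect, Nat.card_congr (Equiv.subtypeProdEquivSigmaSubtype fun x y ↦ y ^ 2 = g x),
    Nat.card_sigma]
  simp

theorem pointDefect_of_charP_two {R : Type*} [CommRing R] [NoZeroDivisors R] [Finite R] [CharP R 2]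
    (g : R → R) : pointDefect g = 0 := by
  have := Fintype.ofFinite R
  have sq_bijective : Function.Bijective fun y : R ↦ y ^ 2 :=
    Finite.injective_iff_bijective.mp CharTwo.sq_injective
  have card_sqrts (c : R) : Nat.card {y : R // y ^ 2 = c} = 1 := by
    obtain ⟨y, hy, y_unique⟩ := sq_bijective.existsUnique c
    exact Nat.card_eq_one_iff_exists.mpr ⟨⟨y, hy⟩, fun z ↦ Subtype.ext (y_unique z z.2)⟩
  simp only [pointDefect_eq_sum, card_sqrts, Nat.cast_one, sub_self, Finset.sum_const_zero]

section QuadraticChar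

variable {F : Type*} [Field F] [Fintype F] [DecidableEq F]

theorem natCard_sqrts_eq_quadraticChar_add_one (hF : ringChar F ≠ 2) (c : F) :
    (Nat.card {y : F // y ^ 2 = c} : ℤ) = quadraticChar F c + 1 := by
  rw [← quadraticChar_card_sqrts hF, Set.toFinset_card, Nat.card_eq_fintype_card]
  rfl

theorem pointDefect_eq_neg_sum_quadraticChar (hF : ringChar F ≠ 2) (g : F → F) :
    pointDefect g = -∑ x, quadraticChar F (g x) := by
  simp only [pointDefect_eq_sum, natCard_sqrts_eq_quadraticChar_add_one hF, sub_add_cancel_right,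
    Finset.sum_neg_distrib]

theorem quadraticChar_pow_of_odd {n : ℕ} (hn : Odd n) (c : F) :
    quadraticChar F (c ^ n) = quadraticChar F c := by
  rw [map_pow, ← MulChar.pow_apply' _ hn.pos.ne', quadraticChar_isQuadratic F |>.pow_odd hn]

theorem sum_quadraticChar_eval_scaleRoots (hF : ringChar F ≠ 2) {P : F[X]}
    (hP : Odd P.natDegree) (c : F) :
    ∑ x, quadraticChar F ((P.scaleRoots c).eval x) =
      quadraticChar F c * ∑ x, quadraticChar F (P.eval x) := by
  obtain rfl | hc := eq_or_ne c 0
  · simp only [scaleRoots_zero, eval_smul, eval_pow, eval_X, smul_eq_mul, map_mul,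
      quadraticChar_pow_of_odd hP, ← Finset.mul_sum, quadraticChar_sum_zero hF, quadraticChar_zero,
      mul_zero, zero_mul]
  · rw [Finset.mul_sum, ← Equiv.sum_comp (Equiv.mulLeft₀ c hc)]
    simp only [Equiv.mulLeft₀_apply, scaleRoots_eval_mul, map_mul, quadraticChar_pow_of_odd hP]

theorem pointDefect_eval_scaleRoots (hF : ringChar F ≠ 2) {P : F[X]} (hP : Odd P.natDegree)
    (c : F) :
    pointDefect (P.scaleRoots c).eval = quadraticChar F c * pointDefect P.eval := by
  simp only [pointDefect_eq_neg_sum_quadraticChar hF, sum_quadraticChar_eval_scaleRoots hF hP,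
    mul_neg]

end QuadraticChar

theorem eval_scaleRoots_cubic {R : Type*} [CommSemiring R] (P : Cubic R) (ha : P.a ≠ 0) (c x : R) :
    (P.toPoly.scaleRoots c).eval x =
      P.a * x ^ 3 + c * P.b * x ^ 2 + c ^ 2 * P.c * x + c ^ 3 * P.d := by
  have natDegree_eq : P.toPoly.natDegree = 3 := Cubic.natDegree_of_a_ne_zero ha
  rw [eval_eq_sum_range, natDegree_scaleRoots, natDegree_eq]
  simp only [Finset.sum_range_succ, Finset.sum_range_zero, coeff_scaleRoots, natDegree_eq,
    Cubic.coeff_eq_a, Cubic.coeff_eq_b, Cubic.coeff_eq_c, Cubic.coeff_eq_d]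
  ring

theorem nagao_sum_of_twisted_fibers_general {F : Type*} [Field F] [Fintype F] {P : F[X]}
    (hP : Odd P.natDegree) :
    ∑ t, pointDefect (P.scaleRoots (P.eval t)).eval = -pointDefect P.eval ^ 2 := by
  classical
  by_cases hF : ringChar F = 2
  · have : CharP F 2 := ringChar.of_eq hF
    simp [pointDefect_of_charP_two]
  calc ∑ t, pointDefect (P.scaleRoots (P.eval t)).eval
    _ = (∑ t, quadraticChar F (P.eval t)) * pointDefect P.eval := by
      simp only [pointDefect_eval_scaleRoots hF hP, Finset.sum_mul]
    _ = -pointDefect P.eval ^ 2 := by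
      rw [pointDefect_eq_neg_sum_quadraticChar hF]
      ring

/-- Let `p` be an odd prime and `a, b ∈ F_p`.  With
`f(t) = t³ + a t + b`, one has
`Σ_{t ∈ F_p} (p − #{(x,y) : y² = x³ + f(t)² a x + f(t)³ b})
  = −(p − #{(x,y) : y² = x³ + a x + b})²`. -/
theorem nagao_sum_of_twisted_fibers
    (p : ℕ) [Fact p.Prime] (hp : p ≠ 2) (a b : ZMod p) :
    ∑ t : ZMod p,
        ((p : ℤ) - Nat.card {xy : ZMod p × ZMod p //
          xy.2 ^ 2 = xy.1 ^ 3 + (t ^ 3 + a * t + b) ^ 2 * a * xy.1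
            + (t ^ 3 + a * t + b) ^ 3 * b}) =
      -((p : ℤ) - Nat.card {xy : ZMod p × ZMod p //
          xy.2 ^ 2 = xy.1 ^ 3 + a * xy.1 + b}) ^ 2 := by
  let f : (ZMod p)[X] := Cubic.toPoly ⟨1, 0, a, b⟩
  have odd_natDegree : Odd f.natDegree := by
    rw [Cubic.natDegree_of_a_ne_zero' one_ne_zero]
    decide
  have eval_f (t : ZMod p) : f.eval t = t ^ 3 + a * t + b := by
    simp [f, Cubic.toPoly]
  have eval_twist (c x : ZMod p) :
      (f.scaleRoots c).eval x = x ^ 3 + c ^ 2 * a * x + c ^ 3 * b := by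
    simp [f, eval_scaleRoots_cubic]
  simpa only [pointDefect, eval_f, eval_twist, Nat.card_zmod] using
    nagao_sum_of_twisted_fibers_general odd_natDegree
end

section
/- Let p be an odd prime, let χ denote the quadratic character of F_p (χ(0) = 0, χ(u) = 1 if u is a nonzero square, χ(u) = −1 otherwise), let d be an odd positive integer, and let f(x) = Σ_{i=0}^{d} c_i x^i ∈ F_p[x] be a monic polynomial of degree d whose coefficients are palindromic, i.e. c_i = c_{d−i} for all 0 ≤ i ≤ d (so in particular c_0 = c_d = 1). Then Σ_{t ∈ F_p} χ( f(t²) ) = 2 · Σ_{x ∈ F_p} χ( f(x) ) − 1. -/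
/-!
Counting square roots gives `∑ t, g (t ^ 2) = ∑ x, (χ x + 1) * g x`. Take `g x = χ (f x)`. For
`x ≠ 0` we have `f x = x ^ d * f.reverse x⁻¹` with `d = deg f`; as `d` is odd,
`χ (x ^ (d + 1)) = 1`, so `χ x * χ (f x) = χ (f.reverse x⁻¹)`. Since `x ↦ x⁻¹` permutes the field,
the twisted sum `∑ x, χ x * χ (f x)` is `∑ x, χ (f.reverse x)` without its term
`χ f.leadingCoeff` at `x = 0`, and `f.reverse = f` when `f` is palindromic.
-/

open Polynomial

theorem reverse_eq_self_iff_coeff {R : Type*} [Semiring R] {f : R[X]} :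
    f.reverse = f ↔ ∀ i ≤ f.natDegree, f.coeff i = f.coeff (f.natDegree - i) := by
  refine ext_iff.trans (forall_congr' fun i ↦ ?_)
  rw [coeff_reverse]
  by_cases hi : i ≤ f.natDegree
  · simp [revAt_le hi, hi, eq_comm]
  · simp [revAt_eq_self_of_lt (not_le.mp hi), hi]

section Field

variable {F : Type*} [Field F]

theorem eval_eq_pow_natDegree_mul_eval_inv_reverse (f : F[X]) {x : F} (hx : x ≠ 0) :
    f.eval x = x ^ f.natDegree * f.reverse.eval x⁻¹ := by
  let := invertibleOfNonzero hx
  simpa [eval₂_id, mul_comm] using (eval₂_reverse_mul_pow (RingHom.id F) x f).symm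

theorem mulChar_mul_mulChar_eval {R : Type*} [CommMonoidWithZero R] {χ : MulChar F R} {f : F[X]}
    (hχ : χ ^ (f.natDegree + 1) = 1) {x : F} (hx : x ≠ 0) :
    χ x * χ (f.eval x) = χ (f.reverse.eval x⁻¹) := by
  have hχx : χ x ^ (f.natDegree + 1) = 1 := by
    rw [← MulChar.pow_apply' χ f.natDegree.succ_ne_zero, hχ, MulChar.one_apply hx.isUnit]
  rw [eval_eq_pow_natDegree_mul_eval_inv_reverse f hx, map_mul, map_pow, ← mul_assoc,
    ← pow_succ', hχx, one_mul]

variable [Fintype F]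

theorem sum_mulChar_mul_mulChar_eval {R : Type*} [CommRing R] {χ : MulChar F R} {f : F[X]}
    (hχ : χ ^ (f.natDegree + 1) = 1) :
    ∑ x, χ x * χ (f.eval x) = ∑ x, χ (f.reverse.eval x) - χ f.leadingCoeff := by
  classical
  calc ∑ x, χ x * χ (f.eval x)
      = ∑ x ∈ Finset.univ.erase 0, χ x * χ (f.eval x) :=
        (Finset.sum_erase _ (by rw [MulChar.map_zero, zero_mul])).symm
    _ = ∑ x ∈ Finset.univ.erase 0, χ (f.reverse.eval x⁻¹) :=
        Finset.sum_congr rfl fun x hx ↦ mulChar_mul_mulChar_eval hχ (Finset.ne_of_mem_erase hx)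
    _ = ∑ x, χ (f.reverse.eval x⁻¹) - χ f.leadingCoeff := by
        rw [Finset.sum_erase_eq_sub (Finset.mem_univ 0), inv_zero, ← coeff_zero_eq_eval_zero,
          coeff_zero_reverse]
    _ = ∑ x, χ (f.reverse.eval x) - χ f.leadingCoeff := by
        congr 1
        exact Fintype.sum_equiv (Equiv.inv F) _ _ fun _ ↦ rfl

variable [DecidableEq F]

theorem sum_comp_sq_eq_sum_quadraticChar_add_one_zsmul {M : Type*} [AddCommGroup M]
    (hF : ringChar F ≠ 2) (g : F → M) :
    ∑ t, g (t ^ 2) = ∑ x, (quadraticChar F x + 1) • g x := by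
  rw [← Finset.sum_fiberwise' Finset.univ (fun t : F ↦ t ^ 2) g]
  refine Finset.sum_congr rfl fun x _ ↦ ?_
  rw [Finset.sum_const, ← quadraticChar_card_sqrts hF x, natCast_zsmul, Set.toFinset_ofPred]

theorem palindromic_char_sum_general (hF : ringChar F ≠ 2) {f : F[X]} (hf : Odd f.natDegree) :
    ∑ t, quadraticChar F (f.eval (t ^ 2)) =
      ∑ x, quadraticChar F (f.eval x) + ∑ x, quadraticChar F (f.reverse.eval x)
        - quadraticChar F f.leadingCoeff := by
  have hχ : quadraticChar F ^ (f.natDegree + 1) = 1 :=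
    (quadraticChar_isQuadratic F).pow_even hf.add_one
  rw [sum_comp_sq_eq_sum_quadraticChar_add_one_zsmul hF fun x ↦ quadraticChar F (f.eval x)]
  simp only [smul_eq_mul, add_one_mul, Finset.sum_add_distrib, sum_mulChar_mul_mulChar_eval hχ]
  ring

end Field

/-- Let `p` be an odd prime, `χ` the quadratic character of `F_p`,
`d` an odd positive integer, and `f ∈ F_p[x]` a monic palindromic (self-reciprocal)
polynomial of degree `d`.  Then
`Σ_{t ∈ F_p} χ(f(t²)) = 2 Σ_{x ∈ F_p} χ(f(x)) − 1`. -/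
theorem palindromic_char_sum
    (p : ℕ) [Fact p.Prime] (hp : p ≠ 2)
    (d : ℕ) (hd_odd : Odd d) (hd_pos : 0 < d)
    (f : Polynomial (ZMod p)) (hf_monic : f.Monic) (hf_deg : f.natDegree = d)
    (hf_palin : ∀ i ≤ d, f.coeff i = f.coeff (d - i)) :
    ∑ t : ZMod p, quadraticChar (ZMod p) (f.eval (t ^ 2)) =
      2 * (∑ x : ZMod p, quadraticChar (ZMod p) (f.eval x)) - 1 := by
  subst hf_deg
  rw [palindromic_char_sum_general ((ZMod.ringChar_zmod_n p).trans_ne hp) hd_odd,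
    reverse_eq_self_iff_coeff.mpr hf_palin, hf_monic.leadingCoeff, map_one, two_mul]
end
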